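/- arXiv:1207.1175 — 2 statements merged into one kernel-verified Lean document; each statement's English description precedes it below -/
import Mathlib

section
/- For every real σ ≥ 2 there exists a constant C > 0 such that for all smooth 2π-periodic functions f and g, ‖D^σ(fg) − f·(D^σ g)‖_{L²(0,2π)} ≤ C·( ‖f‖_{H²}·‖g‖_{H^{σ-1}} + ‖f‖_{H^σ}·‖g‖_{H¹} ). -/
/-- The `n`-th Fourier coefficient of a `2π`-periodic function:
`ĥ(n) = (1/2π) ∫₀^{2π} h(x) e^{-inx} dx`. -/
noncomputable def fourierCoef (f : ℝ → ℂ) (n : ℤ) : ℂ :=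
  (1 / (2 * Real.pi)) * ∫ x in (0:ℝ)..(2 * Real.pi), f x * Complex.exp (-Complex.I * n * x)

/-- The Fourier multiplier `D^s = (1 - ∂ₓ²)^{s/2}`, multiplying the `n`-th Fourier
coefficient by `(1 + n²)^{s/2}`. -/
noncomputable def Dop (s : ℝ) (f : ℝ → ℂ) : ℝ → ℂ :=
  fun x => ∑' n : ℤ, ((1 + (n : ℝ) ^ 2) ^ (s / 2) : ℝ) * fourierCoef f n *
    Complex.exp (Complex.I * n * x)

/-- The Sobolev norm `‖h‖_{H^s} = (Σ_{n∈ℤ} (1+n²)^s |ĥ(n)|²)^{1/2}`. -/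
noncomputable def sobNorm (s : ℝ) (f : ℝ → ℂ) : ℝ :=
  Real.sqrt (∑' n : ℤ, (1 + (n : ℝ) ^ 2) ^ s * ‖fourierCoef f n‖ ^ 2)

/-- The `L²(0,2π)` norm. -/
noncomputable def L2Norm (f : ℝ → ℂ) : ℝ :=
  Real.sqrt (∫ x in (0:ℝ)..(2 * Real.pi), ‖f x‖ ^ 2)

/-!
On the Fourier side the commutator `[D^σ, f] g` has kernel `(⟨n⟩^σ - ⟨k⟩^σ) f̂(n - k) ĝ(k)`. Since
`⟨·⟩` is `1`-Lipschitz, the symbol is at most a constant times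
`⟨n - k⟩^σ + ⟨n - k⟩ ⟨k⟩^(σ - 1)`. By Parseval the `L²` norm of the commutator is then controlled by
two convolutions, which Young's inequality bounds by an `ℓ²` norm times an `ℓ¹` norm. The `ℓ¹` norms
cost `r > 1/2` derivatives, by Cauchy–Schwarz against `⟨n⟩^(-r) ∈ ℓ²`.
-/

open MeasureTheory Measure
open scoped ENNReal Real
open Complex (I exp)

section SequenceSpaces

theorem tsum_mul_rpow_le {ι : Type*} {p : ℝ} (hp : 1 ≤ p) (w x : ι → ℝ≥0∞) :
    (∑' i, w i * x i) ^ p ≤ (∑' i, w i) ^ (p - 1) * ∑' i, w i * x i ^ p := by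
  have hp₀ : 0 < p := zero_lt_one.trans_le hp
  rw [← ENNReal.le_rpow_inv_iff hp₀, ENNReal.tsum_eq_iSup_sum]
  refine iSup_le fun s ↦ ?_
  calc ∑ i ∈ s, w i * x i
      ≤ (∑ i ∈ s, w i) ^ (1 - p⁻¹) * (∑ i ∈ s, w i * x i ^ p) ^ p⁻¹ :=
        ENNReal.inner_le_weight_mul_Lp_of_nonneg s hp w x
    _ = ((∑ i ∈ s, w i) ^ (p - 1) * ∑ i ∈ s, w i * x i ^ p) ^ p⁻¹ := by
        rw [ENNReal.mul_rpow_of_nonneg _ _ (by positivity), ← ENNReal.rpow_mul]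
        congr 2
        field_simp
    _ ≤ ((∑' i, w i) ^ (p - 1) * ∑' i, w i * x i ^ p) ^ p⁻¹ := by
        gcongr <;> exact ENNReal.sum_le_tsum _

theorem tsum_tsum_sub_mul_rpow_le {G : Type*} [AddGroup G] {p : ℝ} (hp : 1 ≤ p)
    (x y : G → ℝ≥0∞) :
    ∑' n, (∑' k, x (n - k) * y k) ^ p ≤ (∑' n, x n ^ p) * (∑' k, y k) ^ p := by
  calc ∑' n, (∑' k, x (n - k) * y k) ^ p
      ≤ ∑' n, (∑' k, y k) ^ (p - 1) * ∑' k, y k * x (n - k) ^ p :=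
        ENNReal.tsum_le_tsum fun n ↦ by
          simpa only [mul_comm] using tsum_mul_rpow_le hp y fun k ↦ x (n - k)
    _ = (∑' k, y k) ^ (p - 1) * ∑' k, y k * ∑' n, x (n - k) ^ p := by
        rw [ENNReal.tsum_mul_left, ENNReal.tsum_comm]
        simp only [ENNReal.tsum_mul_left]
    _ = (∑' k, y k) ^ (p - 1) * ((∑' k, y k) * ∑' n, x n ^ p) := by
        have htranslate (k : G) : ∑' n, x (n - k) ^ p = ∑' n, x n ^ p :=
          (Equiv.subRight k).tsum_eq fun n ↦ x n ^ p
        simp only [htranslate, ENNReal.tsum_mul_right]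
    _ = (∑' n, x n ^ p) * (∑' k, y k) ^ p := by
        nth_rw 2 [← ENNReal.rpow_one (∑' k, y k)]
        rw [← mul_assoc, ← ENNReal.rpow_add_of_nonneg _ _ (by linarith) zero_le_one,
          sub_add_cancel, mul_comm]

variable {ι E : Type*} [MeasurableSpace ι] [MeasurableSingletonClass ι]

theorem eLpNorm_count_eq_tsum_rpow [ENorm E] {p : ℝ≥0∞} (hp₀ : p ≠ 0) (hp : p ≠ ∞) (x : ι → E) :
    eLpNorm x p count = (∑' i, ‖x i‖ₑ ^ p.toReal) ^ p.toReal⁻¹ := by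
  rw [eLpNorm_eq_lintegral_rpow_enorm_toReal hp₀ hp, lintegral_count, one_div]

theorem eLpNorm_tsum_sub_mul_le {G : Type*} [AddGroup G] [MeasurableSpace G]
    [MeasurableSingletonClass G] {p : ℝ≥0∞} (hp₁ : 1 ≤ p) (hp : p ≠ ∞) (x y : G → ℝ≥0∞) :
    eLpNorm (fun n ↦ ∑' k, x (n - k) * y k) p count ≤ eLpNorm x p count * eLpNorm y 1 count := by
  have hp₀ : p ≠ 0 := (zero_lt_one.trans_le hp₁).ne'
  have hp₁' : 1 ≤ p.toReal := by simpa using ENNReal.toReal_mono hp hp₁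
  simp only [eLpNorm_count_eq_tsum_rpow hp₀ hp,
    eLpNorm_count_eq_tsum_rpow one_ne_zero ENNReal.one_ne_top, enorm_eq_self, ENNReal.toReal_one,
    inv_one, ENNReal.rpow_one]
  rw [ENNReal.rpow_inv_le_iff (by positivity), ENNReal.mul_rpow_of_nonneg _ _ (by positivity),
    ENNReal.rpow_inv_rpow (by positivity)]
  exact tsum_tsum_sub_mul_rpow_le hp₁' x y

theorem tsum_sub_mul_comm {G : Type*} [AddCommGroup G] (x y : G → ℝ≥0∞) (n : G) :
    ∑' k, x (n - k) * y k = ∑' k, y (n - k) * x k := by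
  rw [← (Equiv.subLeft n).tsum_eq]
  simp [mul_comm]

theorem toReal_eLpNorm_two_count [SeminormedAddGroup E] (x : ι → E) :
    (eLpNorm x 2 count).toReal = √(∑' i, ‖x i‖ ^ 2) := by
  rw [eLpNorm_count_eq_tsum_rpow two_ne_zero ENNReal.ofNat_ne_top, ← ENNReal.toReal_rpow,
    ENNReal.tsum_toReal_eq (by simp), Real.sqrt_eq_rpow]
  simp

end SequenceSpaces

section RpowDifferences

theorem abs_rpow_sub_rpow_le {p a b : ℝ} (hp : 1 ≤ p) (ha : 0 ≤ a) (hb : 0 ≤ b) :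
    |a ^ p - b ^ p| ≤ p * max a b ^ (p - 1) * |a - b| := by
  refine (convex_uIcc b a).norm_image_sub_le_of_norm_hasDerivWithin_le
    (fun t _ ↦ (Real.hasDerivAt_rpow_const (.inr hp)).hasDerivWithinAt) (fun t ht ↦ ?_)
    Set.left_mem_uIcc Set.right_mem_uIcc
  have ht₀ : 0 ≤ t := (le_inf hb ha).trans ht.1
  rw [Real.norm_of_nonneg (by positivity), max_comm]
  gcongr
  exacts [ht.2]

theorem abs_rpow_sub_rpow_le_abs_sub_rpow {p a b : ℝ} (hp₀ : 0 ≤ p) (hp₁ : p ≤ 1) (ha : 0 ≤ a)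
    (hb : 0 ≤ b) : |a ^ p - b ^ p| ≤ |a - b| ^ p := by
  wlog hab : b ≤ a generalizing a b
  · rw [abs_sub_comm, abs_sub_comm a]
    exact this hb ha (le_of_not_ge hab)
  have h := Real.rpow_add_le_add_rpow hb (sub_nonneg.2 hab) hp₀ hp₁
  rw [add_sub_cancel] at h
  rw [abs_of_nonneg (sub_nonneg.2 hab), abs_of_nonneg (sub_nonneg.2 (Real.rpow_le_rpow hb hab hp₀))]
  linarith

theorem add_rpow_le_two_rpow_mul_add {p a b : ℝ} (hp : 0 ≤ p) (ha : 0 ≤ a) (hb : 0 ≤ b) :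
    (a + b) ^ p ≤ 2 ^ p * (a ^ p + b ^ p) := by
  wlog hab : b ≤ a generalizing a b
  · rw [add_comm, add_comm (a ^ p)]
    exact this hb ha (le_of_not_ge hab)
  calc (a + b) ^ p ≤ (2 * a) ^ p := by gcongr; linarith
    _ = 2 ^ p * a ^ p := Real.mul_rpow zero_le_two ha
    _ ≤ 2 ^ p * (a ^ p + b ^ p) := by gcongr; exact le_add_of_nonneg_right (by positivity)

theorem abs_rpow_sub_rpow_le_mul_add {σ a b c : ℝ} (hσ : 0 ≤ σ) (ha : 0 ≤ a) (hb : 0 ≤ b)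
    (hc : |a - b| ≤ c) :
    |a ^ σ - b ^ σ| ≤ max 1 (σ * 2 ^ (σ - 1)) * (c ^ σ + c * b ^ (σ - 1)) := by
  have hc₀ : 0 ≤ c := (abs_nonneg _).trans hc
  rcases le_total σ 1 with h | h
  · calc |a ^ σ - b ^ σ| ≤ |a - b| ^ σ := abs_rpow_sub_rpow_le_abs_sub_rpow hσ h ha hb
      _ ≤ c ^ σ := by gcongr
      _ ≤ 1 * (c ^ σ + c * b ^ (σ - 1)) := by
          rw [one_mul]
          exact le_add_of_nonneg_right (by positivity)
      _ ≤ _ := by gcongr; exact le_max_left _ _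
  · have hmax : max a b ≤ c + b := max_le (by linarith [le_abs_self (a - b)]) (by linarith)
    calc |a ^ σ - b ^ σ| ≤ σ * max a b ^ (σ - 1) * |a - b| := abs_rpow_sub_rpow_le h ha hb
      _ ≤ σ * (c + b) ^ (σ - 1) * c := by gcongr
      _ ≤ σ * (2 ^ (σ - 1) * (c ^ (σ - 1) + b ^ (σ - 1))) * c := by
          gcongr
          exact add_rpow_le_two_rpow_mul_add (by linarith) hc₀ hb
      _ = σ * 2 ^ (σ - 1) * (c ^ σ + c * b ^ (σ - 1)) := by
          have : c ^ (σ - 1) * c = c ^ σ := by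
            rw [← Real.rpow_add_one' hc₀ (by linarith), sub_add_cancel]
          linear_combination σ * 2 ^ (σ - 1) * this
      _ ≤ _ := by gcongr; exact le_max_right _ _

end RpowDifferences

section JapaneseBracket

/-- The Japanese bracket `⟨x⟩ = (1 + x²)^{1/2}`, the symbol of `D`. -/
noncomputable def japaneseBracket (x : ℝ) : ℝ := √(1 + x ^ 2)

theorem japaneseBracket_rpow (s x : ℝ) : japaneseBracket x ^ s = (1 + x ^ 2) ^ (s / 2) := by
  rw [japaneseBracket, Real.sqrt_eq_rpow, ← Real.rpow_mul (by positivity), one_div_mul_eq_div]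

theorem japaneseBracket_sq (x : ℝ) : japaneseBracket x ^ 2 = 1 + x ^ 2 :=
  Real.sq_sqrt (by positivity)

theorem one_le_japaneseBracket (x : ℝ) : 1 ≤ japaneseBracket x :=
  Real.one_le_sqrt.2 (by nlinarith)

theorem japaneseBracket_pos (x : ℝ) : 0 < japaneseBracket x :=
  zero_lt_one.trans_le (one_le_japaneseBracket x)

theorem abs_le_japaneseBracket (x : ℝ) : |x| ≤ japaneseBracket x :=
  Real.abs_le_sqrt (by linarith)

theorem japaneseBracket_eq_norm (x : ℝ) : japaneseBracket x = ‖(1 + x * I : ℂ)‖ := by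
  simpa [japaneseBracket] using (Complex.norm_add_mul_I 1 x).symm

theorem abs_japaneseBracket_sub_le (x y : ℝ) :
    |japaneseBracket x - japaneseBracket y| ≤ |x - y| := by
  rw [japaneseBracket_eq_norm, japaneseBracket_eq_norm]
  refine (abs_norm_sub_norm_le _ _).trans_eq ?_
  rw [add_sub_add_left_eq_sub, ← sub_mul, norm_mul, Complex.norm_I, mul_one, ← Complex.ofReal_sub,
    Complex.norm_real, Real.norm_eq_abs]

theorem summable_japaneseBracket_rpow_neg {s : ℝ} (hs : 1 < s) :
    Summable fun n : ℤ ↦ japaneseBracket n ^ (-s) := by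
  refine .of_norm_bounded_eventually (Real.summable_abs_int_rpow hs) ?_
  filter_upwards [(Set.finite_singleton (0 : ℤ)).compl_mem_cofinite] with n hn
  have hn : (n : ℝ) ≠ 0 := by simpa using hn
  rw [Real.norm_of_nonneg (Real.rpow_nonneg (japaneseBracket_pos _).le _)]
  exact Real.rpow_le_rpow_of_nonpos (abs_pos.2 hn) (abs_le_japaneseBracket _) (by linarith)

theorem memLp_japaneseBracket_rpow_neg {s : ℝ} {p : ℝ≥0∞} (hp₀ : p ≠ 0) (hp : p ≠ ∞)
    (hs : 1 < s * p.toReal) :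
    MemLp (fun n : ℤ ↦ japaneseBracket n ^ (-s)) p count := by
  rw [← integrable_norm_rpow_iff .of_discrete hp₀ hp, integrable_count_iff]
  refine (summable_japaneseBracket_rpow_neg hs).congr fun n ↦ ?_
  have hn := (japaneseBracket_pos n).le
  rw [Real.norm_of_nonneg (by positivity), Real.norm_of_nonneg (by positivity), ← Real.rpow_mul hn,
    neg_mul]

theorem abs_japaneseBracket_rpow_sub_le {σ : ℝ} (hσ : 0 ≤ σ) (x y : ℝ) :
    |japaneseBracket x ^ σ - japaneseBracket y ^ σ| ≤ max 1 (σ * 2 ^ (σ - 1)) *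
      (japaneseBracket (x - y) ^ σ + japaneseBracket (x - y) * japaneseBracket y ^ (σ - 1)) :=
  abs_rpow_sub_rpow_le_mul_add hσ (japaneseBracket_pos x).le (japaneseBracket_pos y).le
    ((abs_japaneseBracket_sub_le x y).trans (abs_le_japaneseBracket _))

end JapaneseBracket

section FourierCoefficients

theorem norm_exp_I_mul_int_mul (n : ℤ) (x : ℝ) : ‖exp (I * n * x)‖ = 1 := by
  simp [Complex.norm_exp]

theorem periodic_exp_I_mul_int_mul (n : ℤ) :
    Function.Periodic (fun x : ℝ ↦ exp (I * n * x)) (2 * π) := fun x ↦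
  Complex.exp_eq_exp_iff_exists_int.2 ⟨n, by push_cast; ring⟩

theorem hasDerivAt_exp_mul_ofReal (c : ℂ) (x : ℝ) :
    HasDerivAt (fun x : ℝ ↦ exp (c * x)) (c * exp (c * x)) x := by
  simpa [mul_comm] using (Complex.ofRealCLM.hasDerivAt.const_mul c).cexp

theorem fourierCoef_eq_integral_exp_I_mul (f : ℝ → ℂ) (n : ℤ) :
    fourierCoef f n = 1 / (2 * π) * ∫ x in (0 : ℝ)..2 * π, f x * exp (I * (-n : ℤ) * x) := by
  simp [fourierCoef]

theorem fourier_coe_two_pi (n : ℤ) (x : ℝ) :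
    fourier n (x : AddCircle (2 * π)) = exp (I * n * x) := by
  rw [fourier_coe_apply]
  congr 1
  push_cast
  field

theorem norm_fourierCoef_le {f : ℝ → ℂ} {M : ℝ} (hM : ∀ x ∈ Set.Icc 0 (2 * π), ‖f x‖ ≤ M)
    (n : ℤ) : ‖fourierCoef f n‖ ≤ M := by
  have hint : ‖∫ x in (0 : ℝ)..2 * π, f x * exp (I * (-n : ℤ) * x)‖ ≤ M * |2 * π - 0| := by
    refine intervalIntegral.norm_integral_le_of_norm_le_const fun x hx ↦ ?_
    rw [Set.uIoc_of_le Real.two_pi_pos.le] at hx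
    rw [norm_mul, norm_exp_I_mul_int_mul, mul_one]
    exact hM x (Set.Ioc_subset_Icc_self hx)
  have hnorm : ‖(1 / (2 * π) : ℂ)‖ = (2 * π)⁻¹ := by simp [abs_of_pos Real.pi_pos]
  rw [fourierCoef_eq_integral_exp_I_mul, norm_mul, hnorm, inv_mul_le_iff₀ Real.two_pi_pos,
    mul_comm (2 * π)]
  rwa [sub_zero, abs_of_pos Real.two_pi_pos] at hint

theorem fourierCoef_sub {f g : ℝ → ℂ} (hf : Continuous f) (hg : Continuous g) (n : ℤ) :
    fourierCoef (fun x ↦ f x - g x) n = fourierCoef f n - fourierCoef g n := by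
  simp only [fourierCoef, sub_mul]
  rw [intervalIntegral.integral_sub, mul_sub] <;>
    exact Continuous.intervalIntegrable (by fun_prop) _ _

theorem fourierCoef_deriv {f : ℝ → ℂ} (hf : ContDiff ℝ 1 f) (hper : Function.Periodic f (2 * π))
    (n : ℤ) : fourierCoef (deriv f) n = I * n * fourierCoef f n := by
  have hexp : exp (-I * n * (2 * π : ℝ)) = exp (-I * n * (0 : ℝ)) := by
    simpa using (periodic_exp_I_mul_int_mul (-n)).eq
  have hparts : ∫ x in (0 : ℝ)..2 * π, deriv f x * exp (-I * n * x) =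
      I * n * ∫ x in (0 : ℝ)..2 * π, f x * exp (-I * n * x) := by
    simp only [mul_comm (deriv f _)]
    rw [intervalIntegral.integral_mul_deriv_eq_deriv_mul
      (fun x _ ↦ hasDerivAt_exp_mul_ofReal (-I * n) x)
      (fun x _ ↦ (hf.differentiable one_ne_zero x).hasDerivAt)
      (Continuous.intervalIntegrable (by fun_prop) _ _)
      ((hf.continuous_deriv le_rfl).intervalIntegrable _ _), hexp, hper.eq, sub_self, zero_sub,
      ← intervalIntegral.integral_neg, ← intervalIntegral.integral_const_mul]
    congr 1
    ext x
    ring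
  rw [fourierCoef, fourierCoef, hparts, mul_left_comm]

theorem periodic_deriv {E : Type*} [NormedAddCommGroup E] [NormedSpace ℝ E] {f : ℝ → E} {T : ℝ}
    (hf : Function.Periodic f T) : Function.Periodic (deriv f) T := fun x ↦ by
  rw [← deriv_comp_add_const, hf.funext]

theorem fourierCoef_tsum {ι : Type*} [Countable ι] {F : ι → ℝ → ℂ} {u : ι → ℝ}
    (hF : ∀ i, Continuous (F i)) (hu : Summable u)
    (hFu : ∀ i, ∀ x ∈ Set.Icc 0 (2 * π), ‖F i x‖ ≤ u i) (n : ℤ) :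
    fourierCoef (fun x ↦ ∑' i, F i x) n = ∑' i, fourierCoef (F i) n := by
  have hIoc {x : ℝ} (hx : x ∈ Set.uIoc 0 (2 * π)) : x ∈ Set.Icc 0 (2 * π) :=
    Set.Ioc_subset_Icc_self (by rwa [Set.uIoc_of_le Real.two_pi_pos.le] at hx)
  simp only [fourierCoef_eq_integral_exp_I_mul, tsum_mul_left]
  congr 1
  refine (intervalIntegral.hasSum_integral_of_dominated_convergence (fun i _ ↦ u i)
    (fun i ↦ ?_) (fun i ↦ ?_) ?_ intervalIntegrable_const ?_).tsum_eq.symm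
  · exact Continuous.aestronglyMeasurable (by fun_prop)
  · refine .of_forall fun x hx ↦ ?_
    rw [norm_mul, norm_exp_I_mul_int_mul, mul_one]
    exact hFu i x (hIoc hx)
  · exact .of_forall fun _ _ ↦ hu
  · exact .of_forall fun x hx ↦ (hu.of_norm_bounded fun i ↦ hFu i x (hIoc hx)).hasSum.mul_right _

theorem fourierCoef_mul_exp (f : ℝ → ℂ) (c : ℂ) (k n : ℤ) :
    fourierCoef (fun x ↦ f x * (c * exp (I * k * x))) n = fourierCoef f (n - k) * c := by
  rw [fourierCoef, fourierCoef, mul_assoc, ← intervalIntegral.integral_mul_const]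
  congr 2
  ext x
  rw [show -I * (n - k : ℤ) * x = I * k * x + -I * n * x by push_cast; ring, Complex.exp_add]
  ring

theorem fourierCoef_one (n : ℤ) : fourierCoef (fun _ ↦ 1) n = if n = 0 then 1 else 0 := by
  split_ifs with hn
  · have : (π : ℂ) ≠ 0 := Complex.ofReal_ne_zero.2 Real.pi_ne_zero
    simp [fourierCoef, hn, field]
  · have h := fourierCoef_deriv (f := fun _ ↦ 1) contDiff_const (fun _ ↦ rfl) n
    simpa [fourierCoef, hn] using h

theorem continuous_tsum_exp {b : ℤ → ℂ} (hb : Summable fun k ↦ ‖b k‖) :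
    Continuous fun x : ℝ ↦ ∑' k, b k * exp (I * k * x) :=
  continuous_tsum (fun k ↦ by fun_prop) hb fun k x ↦ by
    rw [norm_mul, norm_exp_I_mul_int_mul, mul_one]

theorem fourierCoef_mul_tsum_exp {f : ℝ → ℂ} (hf : Continuous f) {b : ℤ → ℂ}
    (hb : Summable fun k ↦ ‖b k‖) (n : ℤ) :
    fourierCoef (fun x ↦ f x * ∑' k, b k * exp (I * k * x)) n =
      ∑' k, fourierCoef f (n - k) * b k := by
  obtain ⟨M, hM⟩ := isCompact_Icc.exists_bound_of_continuousOn hf.continuousOn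
  simp only [← tsum_mul_left]
  rw [fourierCoef_tsum (fun k ↦ by fun_prop) (hb.mul_left M)]
  · simp only [fourierCoef_mul_exp]
  · intro k x hx
    rw [norm_mul, norm_mul, norm_exp_I_mul_int_mul, mul_one]
    gcongr
    exact hM x hx

theorem summable_fourierCoef_sub_mul {f : ℝ → ℂ} (hf : Continuous f) {b : ℤ → ℂ}
    (hb : Summable fun k ↦ ‖b k‖) (n : ℤ) : Summable fun k ↦ fourierCoef f (n - k) * b k := by
  obtain ⟨M, hM⟩ := isCompact_Icc.exists_bound_of_continuousOn hf.continuousOn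
  refine (hb.mul_left M).of_norm_bounded fun k ↦ ?_
  rw [norm_mul]
  gcongr
  exact norm_fourierCoef_le hM _

theorem fourierCoef_tsum_exp {b : ℤ → ℂ} (hb : Summable fun k ↦ ‖b k‖) (n : ℤ) :
    fourierCoef (fun x ↦ ∑' k, b k * exp (I * k * x)) n = b n := by
  have h := fourierCoef_mul_tsum_exp (f := fun _ ↦ 1) continuous_const hb n
  simp only [one_mul, fourierCoef_one, sub_eq_zero, ite_mul, zero_mul] at h
  rw [h, tsum_eq_single n (by simp +contextual [eq_comm]), if_pos rfl]

theorem fourierCoeffOn_two_pi (f : ℝ → ℂ) (n : ℤ) :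
    fourierCoeffOn Real.two_pi_pos f n = fourierCoef f n := by
  rw [fourierCoeffOn_eq_integral, sub_zero]
  simp only [fourier_coe_two_pi, smul_eq_mul, Complex.real_smul, fourierCoef_eq_integral_exp_I_mul,
    mul_comm (f _)]
  push_cast
  rfl

theorem L2Norm_eq_eLpNorm_fourierCoef {f : ℝ → ℂ} (hf : Continuous f) :
    L2Norm f = √(2 * π) * (eLpNorm (fourierCoef f) 2 count).toReal := by
  have hL2 : MemLp f 2 (volume.restrict (Set.Ioc 0 (2 * π))) :=
    (memLp_two_iff_integrable_sq_norm hf.aestronglyMeasurable).2 (hf.norm.pow 2).integrableOn_Ioc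
  have hparseval := (hasSum_sq_fourierCoeffOn Real.two_pi_pos hL2).tsum_eq
  simp only [fourierCoeffOn_two_pi, sub_zero, smul_eq_mul] at hparseval
  rw [toReal_eLpNorm_two_count, hparseval, ← Real.sqrt_mul Real.two_pi_pos.le,
    mul_inv_cancel_left₀ Real.two_pi_pos.ne', L2Norm]

theorem eq_tsum_fourierCoef {f : ℝ → ℂ} (hf : Continuous f) (hper : Function.Periodic f (2 * π))
    (hsum : Summable fun n ↦ ‖fourierCoef f n‖) (x : ℝ) :
    f x = ∑' n : ℤ, fourierCoef f n * exp (I * n * x) := by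
  have : Fact (0 < 2 * π) := ⟨Real.two_pi_pos⟩
  let F : C(AddCircle (2 * π), ℂ) := ⟨hper.lift, hf.quotient_lift _⟩
  have hF : fourierCoeff F = fourierCoef f := by
    ext n
    rw [fourierCoeff_eq_intervalIntegral F n 0, zero_add]
    simp only [fourier_coe_two_pi, smul_eq_mul, Complex.real_smul,
      fourierCoef_eq_integral_exp_I_mul, mul_comm (f _)]
    push_cast
    rfl
  have := has_pointwise_sum_fourier_series_of_summable (f := F) (by rw [hF]; exact hsum.of_norm) x
  simp only [hF, fourier_coe_two_pi] at this
  exact this.tsum_eq.symm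

end FourierCoefficients

section SobolevCoefficients

variable {f g : ℝ → ℂ}

/-- The Fourier coefficients `⟨n⟩^s f̂(n)` of `D^s f`, whose `ℓ²` norm is the `H^s` norm of `f`. -/
noncomputable def sobolevCoef (s : ℝ) (f : ℝ → ℂ) (n : ℤ) : ℂ :=
  japaneseBracket n ^ s • fourierCoef f n

theorem sobolevCoef_zero (f : ℝ → ℂ) : sobolevCoef 0 f = fourierCoef f := by
  ext n
  rw [sobolevCoef, Real.rpow_zero, one_smul]

theorem norm_sobolevCoef (s : ℝ) (f : ℝ → ℂ) (n : ℤ) :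
    ‖sobolevCoef s f n‖ = japaneseBracket n ^ s * ‖fourierCoef f n‖ := by
  rw [sobolevCoef, norm_smul, Real.norm_of_nonneg (Real.rpow_nonneg (japaneseBracket_pos _).le _)]

theorem sobolevCoef_eq_rpow_neg_smul (s t : ℝ) (f : ℝ → ℂ) :
    sobolevCoef s f = (fun n : ℤ ↦ japaneseBracket n ^ (-t)) • sobolevCoef (s + t) f := by
  ext n
  rw [Pi.smul_apply', sobolevCoef, sobolevCoef, smul_smul, ← Real.rpow_add (japaneseBracket_pos _),
    neg_add_cancel_comm_assoc]

theorem Dop_eq_tsum_sobolevCoef (s : ℝ) (f : ℝ → ℂ) :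
    Dop s f = fun x : ℝ ↦ ∑' n : ℤ, sobolevCoef s f n * exp (I * n * x) := by
  simp only [sobolevCoef, japaneseBracket_rpow, Complex.real_smul]
  rfl

theorem sobNorm_eq_eLpNorm_sobolevCoef (s : ℝ) (f : ℝ → ℂ) :
    sobNorm s f = (eLpNorm (sobolevCoef s f) 2 count).toReal := by
  rw [toReal_eLpNorm_two_count, sobNorm]
  congr 1
  refine tsum_congr fun n ↦ ?_
  rw [norm_sobolevCoef, mul_pow, ← Real.rpow_mul_natCast (japaneseBracket_pos _).le,
    japaneseBracket_rpow]
  congr 2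
  push_cast
  ring

theorem eLpNorm_one_sobolevCoef_le (s r : ℝ) (f : ℝ → ℂ) :
    eLpNorm (sobolevCoef s f) 1 count ≤
      eLpNorm (fun n : ℤ ↦ japaneseBracket n ^ (-r)) 2 count *
        eLpNorm (sobolevCoef (s + r) f) 2 count := by
  rw [sobolevCoef_eq_rpow_neg_smul s r]
  exact eLpNorm_smul_le_mul_eLpNorm .of_discrete .of_discrete

theorem sobolevCoef_sub_deriv_deriv (hf : ContDiff ℝ 2 f) (hper : Function.Periodic f (2 * π))
    (s : ℝ) : sobolevCoef s (fun x ↦ f x - deriv (deriv f) x) = sobolevCoef (s + 2) f := by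
  have hf' : ContDiff ℝ 1 (deriv f) := (contDiff_succ_iff_deriv (n := 1).1 hf).2.2
  have hper' : Function.Periodic (deriv f) (2 * π) := periodic_deriv hper
  ext n
  rw [sobolevCoef, sobolevCoef, fourierCoef_sub hf.continuous (hf'.continuous_deriv le_rfl),
    fourierCoef_deriv hf' hper', fourierCoef_deriv (hf.of_le one_le_two) hper,
    Real.rpow_add (japaneseBracket_pos _), Real.rpow_two, japaneseBracket_sq, Complex.real_smul,
    Complex.real_smul]
  push_cast
  linear_combination -(japaneseBracket n ^ s : ℝ) * (n : ℂ) ^ 2 * fourierCoef f n * Complex.I_sq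

/-- The smooth `2π`-periodic functions on the line. -/
structure SmoothPeriodic (f : ℝ → ℂ) : Prop where
  contDiff : ContDiff ℝ (⊤ : ℕ∞) f
  periodic : Function.Periodic f (2 * π)

namespace SmoothPeriodic

theorem continuous (hf : SmoothPeriodic f) : Continuous f :=
  hf.contDiff.continuous

theorem mul (hf : SmoothPeriodic f) (hg : SmoothPeriodic g) :
    SmoothPeriodic fun x ↦ f x * g x :=
  ⟨hf.contDiff.mul hg.contDiff, hf.periodic.mul hg.periodic⟩

theorem sub (hf : SmoothPeriodic f) (hg : SmoothPeriodic g) :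
    SmoothPeriodic fun x ↦ f x - g x :=
  ⟨hf.contDiff.sub hg.contDiff, hf.periodic.sub hg.periodic⟩

theorem deriv (hf : SmoothPeriodic f) : SmoothPeriodic (deriv f) :=
  ⟨(contDiff_infty_iff_deriv.1 hf.contDiff).2, periodic_deriv hf.periodic⟩

theorem exists_norm_sobolevCoef_two_mul_le (hf : SmoothPeriodic f) (k : ℕ) :
    ∃ M, ∀ n, ‖sobolevCoef (2 * k) f n‖ ≤ M := by
  induction k generalizing f with
  | zero =>
    obtain ⟨M, hM⟩ := isCompact_Icc.exists_bound_of_continuousOn hf.continuous.continuousOn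
    exact ⟨M, by simpa [sobolevCoef_zero] using norm_fourierCoef_le hM⟩
  | succ k ih =>
    obtain ⟨M, hM⟩ := ih (hf.sub hf.deriv.deriv)
    refine ⟨M, ?_⟩
    rwa [sobolevCoef_sub_deriv_deriv (contDiff_infty.1 hf.contDiff 2) hf.periodic,
      ← mul_add_one, ← Nat.cast_add_one] at hM

theorem exists_norm_sobolevCoef_le (hf : SmoothPeriodic f) (s : ℝ) :
    ∃ M, ∀ n, ‖sobolevCoef s f n‖ ≤ M := by
  obtain ⟨k, hk⟩ := exists_nat_ge s
  obtain ⟨M, hM⟩ := hf.exists_norm_sobolevCoef_two_mul_le k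
  refine ⟨M, fun n ↦ le_trans ?_ (hM n)⟩
  rw [norm_sobolevCoef, norm_sobolevCoef]
  gcongr
  · exact one_le_japaneseBracket n
  · linarith [k.cast_nonneg (α := ℝ)]

theorem memLp_sobolevCoef (hf : SmoothPeriodic f) (s : ℝ) {p : ℝ≥0∞} (hp₀ : p ≠ 0) (hp : p ≠ ∞) :
    MemLp (sobolevCoef s f) p count := by
  have hp' : 0 < p.toReal := ENNReal.toReal_pos hp₀ hp
  obtain ⟨M, hM⟩ := hf.exists_norm_sobolevCoef_le (s + 2 / p.toReal)
  have hdecay : MemLp (fun n : ℤ ↦ japaneseBracket n ^ (-(2 / p.toReal))) p count :=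
    memLp_japaneseBracket_rpow_neg hp₀ hp (by rw [div_mul_cancel₀ _ hp'.ne']; exact one_lt_two)
  refine hdecay.of_le_mul (c := M) .of_discrete (.of_forall fun n ↦ ?_)
  rw [sobolevCoef_eq_rpow_neg_smul s (2 / p.toReal), Pi.smul_apply', norm_smul, mul_comm]
  gcongr
  exact hM n

theorem summable_norm_sobolevCoef (hf : SmoothPeriodic f) (s : ℝ) :
    Summable fun n ↦ ‖sobolevCoef s f n‖ :=
  integrable_count_iff.1 <| memLp_one_iff_integrable.1 <|
    hf.memLp_sobolevCoef s one_ne_zero ENNReal.one_ne_top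

theorem continuous_Dop (hf : SmoothPeriodic f) (s : ℝ) : Continuous (Dop s f) := by
  rw [Dop_eq_tsum_sobolevCoef]
  exact continuous_tsum_exp (hf.summable_norm_sobolevCoef s)

theorem Dop_zero (hf : SmoothPeriodic f) : Dop 0 f = f := by
  have hsum := hf.summable_norm_sobolevCoef 0
  rw [sobolevCoef_zero] at hsum
  rw [Dop_eq_tsum_sobolevCoef, sobolevCoef_zero]
  exact funext fun x ↦ (eq_tsum_fourierCoef hf.continuous hf.periodic hsum x).symm

theorem fourierCoef_Dop (hf : SmoothPeriodic f) (s : ℝ) :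
    fourierCoef (Dop s f) = sobolevCoef s f := by
  rw [Dop_eq_tsum_sobolevCoef]
  exact funext (fourierCoef_tsum_exp (hf.summable_norm_sobolevCoef s))

end SmoothPeriodic

theorem fourierCoef_mul_Dop (hf : Continuous f) (hg : SmoothPeriodic g) (s : ℝ) (n : ℤ) :
    fourierCoef (fun x ↦ f x * Dop s g x) n = ∑' k, fourierCoef f (n - k) * sobolevCoef s g k := by
  rw [Dop_eq_tsum_sobolevCoef]
  exact fourierCoef_mul_tsum_exp hf (hg.summable_norm_sobolevCoef s) n

theorem fourierCoef_mul (hf : Continuous f) (hg : SmoothPeriodic g) (n : ℤ) :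
    fourierCoef (fun x ↦ f x * g x) n = ∑' k, fourierCoef f (n - k) * fourierCoef g k := by
  simpa only [hg.Dop_zero, sobolevCoef_zero] using fourierCoef_mul_Dop hf hg 0 n

end SobolevCoefficients

section Commutator

variable {f g : ℝ → ℂ}

/-- The commutator `[D^σ, f] g = D^σ (f g) - f D^σ g`. -/
noncomputable def dopCommutator (σ : ℝ) (f g : ℝ → ℂ) : ℝ → ℂ :=
  fun x ↦ Dop σ (fun y ↦ f y * g y) x - f x * Dop σ g x

theorem continuous_dopCommutator (hf : SmoothPeriodic f) (hg : SmoothPeriodic g) (σ : ℝ) :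
    Continuous (dopCommutator σ f g) :=
  ((hf.mul hg).continuous_Dop σ).sub (hf.continuous.mul (hg.continuous_Dop σ))

theorem fourierCoef_dopCommutator (hf : SmoothPeriodic f) (hg : SmoothPeriodic g) (σ : ℝ) (n : ℤ) :
    fourierCoef (dopCommutator σ f g) n =
      ∑' k : ℤ, (japaneseBracket n ^ σ - japaneseBracket k ^ σ) •
        (fourierCoef f (n - k) * fourierCoef g k) := by
  have hsum (s : ℝ) : Summable fun k ↦ fourierCoef f (n - k) * sobolevCoef s g k :=
    summable_fourierCoef_sub_mul hf.continuous (hg.summable_norm_sobolevCoef s) n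
  have hsum₀ := (hsum 0).const_smul (japaneseBracket n ^ σ)
  rw [sobolevCoef_zero] at hsum₀
  have hsub : fourierCoef (dopCommutator σ f g) n =
      fourierCoef (Dop σ fun x ↦ f x * g x) n - fourierCoef (fun x ↦ f x * Dop σ g x) n :=
    fourierCoef_sub ((hf.mul hg).continuous_Dop σ) (hf.continuous.mul (hg.continuous_Dop σ)) n
  rw [hsub, (hf.mul hg).fourierCoef_Dop, fourierCoef_mul_Dop hf.continuous hg, sobolevCoef,
    fourierCoef_mul hf.continuous hg, ← tsum_const_smul'', ← hsum₀.tsum_sub (hsum σ)]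
  simp only [sobolevCoef, sub_smul, mul_smul_comm]

theorem norm_rpow_sub_rpow_smul_le {σ : ℝ} (hσ : 0 ≤ σ) (f g : ℝ → ℂ) (n k : ℤ) :
    ‖(japaneseBracket n ^ σ - japaneseBracket k ^ σ) •
        (fourierCoef f (n - k) * fourierCoef g k)‖ ≤
      max 1 (σ * 2 ^ (σ - 1)) * (‖sobolevCoef σ f (n - k)‖ * ‖fourierCoef g k‖ +
        ‖sobolevCoef 1 f (n - k)‖ * ‖sobolevCoef (σ - 1) g k‖) := by
  have hsymbol := abs_japaneseBracket_rpow_sub_le hσ n k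
  rw [← Int.cast_sub] at hsymbol
  rw [norm_smul, norm_mul, Real.norm_eq_abs]
  simp only [norm_sobolevCoef, Real.rpow_one]
  calc _ ≤ _ := mul_le_mul_of_nonneg_right hsymbol (by positivity)
    _ = _ := by ring

theorem enorm_fourierCoef_dopCommutator_le {σ : ℝ} (hσ : 0 ≤ σ) (hf : SmoothPeriodic f)
    (hg : SmoothPeriodic g) (n : ℤ) :
    ‖fourierCoef (dopCommutator σ f g) n‖ₑ ≤ ENNReal.ofReal (max 1 (σ * 2 ^ (σ - 1))) *
      (∑' k, ‖sobolevCoef σ f (n - k)‖ₑ * ‖fourierCoef g k‖ₑ +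
        ∑' k, ‖sobolevCoef 1 f (n - k)‖ₑ * ‖sobolevCoef (σ - 1) g k‖ₑ) := by
  rw [fourierCoef_dopCommutator hf hg, ← ENNReal.tsum_add, ← ENNReal.tsum_mul_left]
  refine enorm_tsum_le_tsum_enorm.trans (ENNReal.tsum_le_tsum fun k ↦ ?_)
  have h := ENNReal.ofReal_le_ofReal (norm_rpow_sub_rpow_smul_le hσ f g n k)
  rwa [ENNReal.ofReal_mul (by positivity), ENNReal.ofReal_add (by positivity) (by positivity),
    ENNReal.ofReal_mul (by positivity), ENNReal.ofReal_mul (by positivity), ofReal_norm,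
    ofReal_norm, ofReal_norm, ofReal_norm, ofReal_norm] at h

theorem eLpNorm_fourierCoef_dopCommutator_le {σ : ℝ} (hσ : 0 ≤ σ) (hf : SmoothPeriodic f)
    (hg : SmoothPeriodic g) :
    eLpNorm (fourierCoef (dopCommutator σ f g)) 2 count ≤
      ENNReal.ofReal (max 1 (σ * 2 ^ (σ - 1))) *
        (eLpNorm (sobolevCoef σ f) 2 count * eLpNorm (fourierCoef g) 1 count +
          eLpNorm (sobolevCoef 1 f) 1 count * eLpNorm (sobolevCoef (σ - 1) g) 2 count) := by
  let u (n : ℤ) : ℝ≥0∞ := ∑' k, ‖sobolevCoef σ f (n - k)‖ₑ * ‖fourierCoef g k‖ₑ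
  let v (n : ℤ) : ℝ≥0∞ := ∑' k, ‖sobolevCoef 1 f (n - k)‖ₑ * ‖sobolevCoef (σ - 1) g k‖ₑ
  have hu : eLpNorm u 2 count ≤
      eLpNorm (sobolevCoef σ f) 2 count * eLpNorm (fourierCoef g) 1 count := by
    simpa only [eLpNorm_enorm] using eLpNorm_tsum_sub_mul_le one_le_two ENNReal.ofNat_ne_top
      (‖sobolevCoef σ f ·‖ₑ) (‖fourierCoef g ·‖ₑ)
  have hv : eLpNorm v 2 count ≤
      eLpNorm (sobolevCoef 1 f) 1 count * eLpNorm (sobolevCoef (σ - 1) g) 2 count := by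
    simp only [v, tsum_sub_mul_comm (‖sobolevCoef 1 f ·‖ₑ), mul_comm (eLpNorm _ 1 _)]
    simpa only [eLpNorm_enorm] using eLpNorm_tsum_sub_mul_le one_le_two ENNReal.ofNat_ne_top
      (‖sobolevCoef (σ - 1) g ·‖ₑ) (‖sobolevCoef 1 f ·‖ₑ)
  have huv (n : ℤ) : ‖fourierCoef (dopCommutator σ f g) n‖ₑ ≤
      ENNReal.ofReal (max 1 (σ * 2 ^ (σ - 1))) * ‖(u + v) n‖ₑ :=
    enorm_fourierCoef_dopCommutator_le hσ hf hg n
  refine (eLpNorm_le_mul_eLpNorm_of_ae_le_mul'' 2 .of_discrete (.of_forall huv)).trans ?_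
  gcongr
  exact (eLpNorm_add_le .of_discrete .of_discrete one_le_two).trans (add_le_add hu hv)

theorem eLpNorm_fourierCoef_dopCommutator_le_rpow_neg {σ : ℝ} (hσ : 0 ≤ σ) (r : ℝ)
    (hf : SmoothPeriodic f) (hg : SmoothPeriodic g) :
    eLpNorm (fourierCoef (dopCommutator σ f g)) 2 count ≤
      ENNReal.ofReal (max 1 (σ * 2 ^ (σ - 1))) *
        eLpNorm (fun n : ℤ ↦ japaneseBracket n ^ (-r)) 2 count *
        (eLpNorm (sobolevCoef (1 + r) f) 2 count * eLpNorm (sobolevCoef (σ - 1) g) 2 count +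
          eLpNorm (sobolevCoef σ f) 2 count * eLpNorm (sobolevCoef r g) 2 count) := by
  have hf₁ := eLpNorm_one_sobolevCoef_le 1 r f
  have hg₁ := eLpNorm_one_sobolevCoef_le 0 r g
  rw [sobolevCoef_zero, zero_add] at hg₁
  set W := eLpNorm (fun n : ℤ ↦ japaneseBracket n ^ (-r)) 2 count
  calc _ ≤ _ := eLpNorm_fourierCoef_dopCommutator_le hσ hf hg
    _ ≤ ENNReal.ofReal (max 1 (σ * 2 ^ (σ - 1))) *
        (eLpNorm (sobolevCoef σ f) 2 count * (W * eLpNorm (sobolevCoef r g) 2 count) +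
          W * eLpNorm (sobolevCoef (1 + r) f) 2 count *
            eLpNorm (sobolevCoef (σ - 1) g) 2 count) := by
      gcongr
    _ = _ := by ring

theorem exists_L2Norm_dopCommutator_le {σ r : ℝ} (hσ : 0 ≤ σ) (hr : 1 / 2 < r) :
    ∃ C, ∀ f g : ℝ → ℂ, SmoothPeriodic f → SmoothPeriodic g →
      L2Norm (dopCommutator σ f g) ≤
        C * (sobNorm (1 + r) f * sobNorm (σ - 1) g + sobNorm σ f * sobNorm r g) := by
  have hweight : MemLp (fun n : ℤ ↦ japaneseBracket n ^ (-r)) 2 count :=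
    memLp_japaneseBracket_rpow_neg two_ne_zero ENNReal.ofNat_ne_top (by norm_num; linarith)
  have hW := hweight.eLpNorm_ne_top
  set W := eLpNorm (fun n : ℤ ↦ japaneseBracket n ^ (-r)) 2 count
  refine ⟨√(2 * π) * (ENNReal.ofReal (max 1 (σ * 2 ^ (σ - 1))) * W).toReal, fun f g hf hg ↦ ?_⟩
  have hf₂ (s : ℝ) := (hf.memLp_sobolevCoef s two_ne_zero ENNReal.ofNat_ne_top).eLpNorm_ne_top
  have hg₂ (s : ℝ) := (hg.memLp_sobolevCoef s two_ne_zero ENNReal.ofNat_ne_top).eLpNorm_ne_top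
  have hfg (s t : ℝ) := ENNReal.mul_ne_top (hf₂ s) (hg₂ t)
  have hle := ENNReal.toReal_mono
    (ENNReal.mul_ne_top (by finiteness) (ENNReal.add_ne_top.2 ⟨hfg _ _, hfg _ _⟩))
    (eLpNorm_fourierCoef_dopCommutator_le_rpow_neg hσ r hf hg)
  rw [ENNReal.toReal_mul, ENNReal.toReal_add (hfg _ _) (hfg _ _),
    ENNReal.toReal_mul (a := eLpNorm _ _ _), ENNReal.toReal_mul (a := eLpNorm _ _ _)] at hle
  simp only [sobNorm_eq_eLpNorm_sobolevCoef]
  rw [L2Norm_eq_eLpNorm_fourierCoef (continuous_dopCommutator hf hg σ), mul_assoc]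
  gcongr

end Commutator

theorem stmt_8_general (σ r : ℝ) (hσ : 0 ≤ σ) (hr : 1 / 2 < r) :
    ∃ C : ℝ, 0 < C ∧ ∀ f g : ℝ → ℂ,
      ContDiff ℝ (⊤ : ℕ∞) f → ContDiff ℝ (⊤ : ℕ∞) g →
      (∀ x, f (x + 2 * π) = f x) → (∀ x, g (x + 2 * π) = g x) →
      L2Norm (fun x ↦ Dop σ (fun y ↦ f y * g y) x - f x * Dop σ g x)
        ≤ C * (sobNorm (1 + r) f * sobNorm (σ - 1) g + sobNorm σ f * sobNorm r g) := by
  obtain ⟨C, hC⟩ := exists_L2Norm_dopCommutator_le hσ hr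
  refine ⟨max 1 C, lt_max_of_lt_left one_pos, fun f g hf hg hfper hgper ↦
    (hC f g ⟨hf, hfper⟩ ⟨hg, hgper⟩).trans ?_⟩
  gcongr
  · exact add_nonneg (mul_nonneg (Real.sqrt_nonneg _) (Real.sqrt_nonneg _))
      (mul_nonneg (Real.sqrt_nonneg _) (Real.sqrt_nonneg _))
  · exact le_max_right _ _

/-- periodic Kato–Ponce commutator estimate: for every real `σ ≥ 2` there
is `C > 0` such that for all smooth `2π`-periodic `f`, `g`:
`‖D^σ(fg) − f·D^σ g‖_{L²(0,2π)} ≤ C(‖f‖_{H²}‖g‖_{H^{σ-1}} + ‖f‖_{H^σ}‖g‖_{H¹})`. -/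
theorem stmt_8 (σ : ℝ) (hσ : 2 ≤ σ) :
    ∃ C : ℝ, 0 < C ∧ ∀ f g : ℝ → ℂ,
      ContDiff ℝ (⊤ : ℕ∞) f → ContDiff ℝ (⊤ : ℕ∞) g →
      (∀ x, f (x + 2 * Real.pi) = f x) → (∀ x, g (x + 2 * Real.pi) = g x) →
      L2Norm (fun x => Dop σ (fun y => f y * g y) x - f x * Dop σ g x)
        ≤ C * (sobNorm 2 f * sobNorm (σ - 1) g + sobNorm σ f * sobNorm 1 g) := by
  simpa only [one_add_one_eq_two] using stmt_8_general σ 1 (by linarith) (by norm_num)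
end

section
/- For every integer n ≥ 3, there exist a finite index set I, and for each i ∈ I nonnegative integers j₁ⁱ, j₂ⁱ, j₃ⁱ with j₁ⁱ + j₂ⁱ + j₃ⁱ = n − 3 and complex numbers a₁ⁱ, b₁ⁱ, a₂ⁱ, b₂ⁱ, a₃ⁱ, b₃ⁱ, such that for every smooth complex-valued 2π-periodic function u with zero mean: ∫₀^{2π} w_n^C(u) dx = Σ_{i∈I} ∫₀^{2π} ((a₁ⁱ + b₁ⁱH)∂ₓ^{j₁ⁱ} u)·((a₂ⁱ + b₂ⁱH)∂ₓ^{j₂ⁱ} u)·((a₃ⁱ + b₃ⁱH)∂ₓ^{j₃ⁱ} u) dx. -/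
/-- Projection `P₋` onto negative Fourier modes (via the Fourier series). -/
noncomputable def Pminus (f : ℝ → ℂ) : ℝ → ℂ :=
  fun x => ∑' n : ℤ, if n < 0 then fourierCoef f n * Complex.exp (Complex.I * n * x) else 0

/-- The Matsuno densities: `w₁(u) = u` and for `n ≥ 2`
`wₙ(u) = i·P₋∂ₓ w_{n-1}(u) − Σ_{k=2}^n ((−1)^{k+1}/k!)·Σ_{j₁+⋯+j_k=n, jᵢ≥1} w_{j₁}(u)⋯w_{j_k}(u)`. -/
noncomputable def matsunoW (u : ℝ → ℂ) : ℕ → ℝ → ℂ := fun n =>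
  Nat.strongRecOn n fun n prev =>
    if n = 0 then fun _ => 0
    else if n = 1 then u
    else
      let W : ℕ → ℝ → ℂ := fun m => if hm : m < n then prev m hm else fun _ => 0
      fun x =>
        Complex.I * Pminus (deriv (W (n - 1))) x -
          ∑ k ∈ Finset.Icc 2 n, ((-1 : ℂ) ^ (k + 1) / (Nat.factorial k : ℂ)) *
            ∑ j ∈ (Finset.Nat.antidiagonalTuple k n).filter (fun j => ∀ i, 1 ≤ j i),
              ∏ i, W (j i) x

/-- The Hilbert transform `H(e^{inx}) = -i·sgn(n)·e^{inx}` (via the Fourier series). -/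
noncomputable def HilbT (f : ℝ → ℂ) : ℝ → ℂ :=
  fun x => ∑' n : ℤ, (-Complex.I * (n.sign : ℂ)) * fourierCoef f n *
    Complex.exp (Complex.I * n * x)

/-- The operator `Λ^j = (c₁ + c₂·H)∂ₓ^j`. -/
noncomputable def Lam (c₁ c₂ : ℂ) (j : ℕ) (u : ℝ → ℂ) : ℝ → ℂ :=
  fun x => c₁ * deriv^[j] u x + c₂ * HilbT (deriv^[j] u) x

/-- The cubic part `w_n^C(u) = (1/6)·(d³/dt³)|_{t=0} wₙ(tu)`. -/
noncomputable def wCub (u : ℝ → ℂ) (n : ℕ) (x : ℝ) : ℂ :=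
  iteratedDeriv 3 (fun t : ℝ => matsunoW (fun y => (t : ℂ) * u y) n x) 0 / 6

/-!
The operators `(a + bH)∂ₓʲ` are Fourier multipliers, and since `H² = -1` on derivatives, composing
two of them (the left one with at least one derivative) multiplies the coefficients `a + bH` like
complex numbers and adds the orders. The operator `T = iP₋∂ₓ = ½(i + H)∂ₓ` of the recursion and its
transpose `½(-i + H)∂ₓ` for the bilinear form `∫ f g` are of this kind, with `j = 1`.

Grade `wₙ(u)` by its degree in `u`. The linear part is `wₙᴸ = Tⁿ⁻¹ u`, of order `n - 1`. In the
cubic part, `T wₙ₋₁ᶜ` integrates to zero, which leaves products `wⱼᴸ wₗ^Q` with `j + l = n` and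
products `wⱼᴸ wₗᴸ wₘᴸ` with `j + l + m = n`, the latter having total order `n - 3`. In `∫ wⱼᴸ wₗ^Q`
the quadratic part is `wₗ^Q = T wₗ₋₁^Q + ∑ cst · wᵢᴸ wₘᴸ`; transposing `T` moves one derivative onto
the linear factor and lowers `l`, until only products of three linear parts remain.
-/

/-- The compositions of `n` into `k` positive parts. -/
abbrev posTuples (k n : ℕ) : Finset (Fin k → ℕ) :=
  (Finset.Nat.antidiagonalTuple k n).filter fun j => ∀ i, 1 ≤ j i

section posTuples

variable {k n : ℕ} {j : Fin k → ℕ}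

lemma mem_posTuples : j ∈ posTuples k n ↔ ∑ i, j i = n ∧ ∀ i, 1 ≤ j i := by
  rw [Finset.mem_filter, Finset.Nat.mem_antidiagonalTuple]

lemma card_le_of_mem_posTuples (hj : j ∈ posTuples k n) : k ≤ n := by
  obtain ⟨hsum, hpos⟩ := mem_posTuples.1 hj
  simpa [hsum] using Finset.card_nsmul_le_sum Finset.univ j 1 fun i _ => hpos i

lemma lt_of_mem_posTuples (hk : 2 ≤ k) (hj : j ∈ posTuples k n) (i : Fin k) : j i < n := by
  obtain ⟨hsum, hpos⟩ := mem_posTuples.1 hj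
  have : Nontrivial (Fin k) := Fin.nontrivial_iff_two_le.2 hk
  obtain ⟨l, hl⟩ := exists_ne i
  rw [← hsum]
  exact Finset.single_lt_sum hl (Finset.mem_univ i) (Finset.mem_univ l) (hpos l)
    fun _ _ _ => Nat.zero_le _

end posTuples

/-- The sequence with `w₀ = 0`, `w₁ = a` and
`wₙ = T wₙ₋₁ + ∑_{2 ≤ k ≤ n} cₖ ∑_{j₁ + ⋯ + jₖ = n, jᵢ ≥ 1} w_{j₁} ⋯ w_{jₖ}` for `n ≥ 2`. The
Matsuno densities are the case `T = iP₋∂ₓ`, `cₖ = (-1)ᵏ / k!`; keeping the algebra and `T` abstract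
lets the same recursion run on functions, on smooth periodic functions and on polynomials. -/
def matsunoSeq {R A : Type*} [CommSemiring R] [CommSemiring A] [Module R A]
    (c : ℕ → R) (T : A → A) (a : A) : ℕ → A
  | 0 => 0
  | 1 => a
  | n + 2 => T (matsunoSeq c T a (n + 1)) + ∑ k ∈ (Finset.Icc 2 (n + 2)).attach,
      c k • ∑ j ∈ (posTuples k (n + 2)).attach, ∏ i, matsunoSeq c T a (j.1 i)
  decreasing_by
  · exact Nat.lt_succ_self _
  · exact lt_of_mem_posTuples (Finset.mem_Icc.1 k.2).1 j.2 i

lemma matsunoSeq_add_two {R A : Type*} [CommSemiring R] [CommSemiring A] [Module R A]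
    (c : ℕ → R) (T : A → A) (a : A) (n : ℕ) :
    matsunoSeq c T a (n + 2) = T (matsunoSeq c T a (n + 1)) + ∑ k ∈ Finset.Icc 2 (n + 2),
      c k • ∑ j ∈ posTuples k (n + 2), ∏ i, matsunoSeq c T a (j i) := by
  rw [matsunoSeq, ← Finset.sum_attach (Finset.Icc 2 (n + 2))]
  simp only [← Finset.sum_attach (posTuples _ (n + 2))]

lemma map_matsunoSeq {R A B : Type*} [CommSemiring R] [CommSemiring A] [CommSemiring B]
    [Algebra R A] [Algebra R B] (φ : A →ₐ[R] B) {T : A → A} {T' : B → B}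
    (hφ : ∀ x, φ (T x) = T' (φ x)) (c : ℕ → R) (a : A) (n : ℕ) :
    φ (matsunoSeq c T a n) = matsunoSeq c T' (φ a) n := by
  induction n using Nat.strong_induction_on with
  | _ n ih =>
    match n with
    | 0 => simp only [matsunoSeq, map_zero]
    | 1 => simp only [matsunoSeq]
    | n + 2 =>
      simp only [matsunoSeq_add_two, map_add, map_sum, map_smul, map_prod, hφ, ih (n + 1) (by lia)]
      congr 1
      refine Finset.sum_congr rfl fun k hk => congrArg (c k • ·) <| Finset.sum_congr rfl
        fun j hj => Finset.prod_congr rfl fun i _ => ?_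
      exact ih _ (lt_of_mem_posTuples (Finset.mem_Icc.1 hk).1 hj i)

section Components

open Polynomial

variable {R A : Type*} [CommSemiring R] [CommSemiring A] [Algebra R A]

/-- The `R`-linear map `T` applied to each coefficient of a polynomial. -/
noncomputable def coeffMap (T : A →ₗ[R] A) : A[X] →ₗ[R] A[X] :=
  lsum fun k => (monomial k).restrictScalars R ∘ₗ T

lemma coeffMap_monomial (T : A →ₗ[R] A) (k : ℕ) (a : A) :
    coeffMap T (monomial k a) = monomial k (T a) :=
  sum_monomial_index a _ (by simp)

lemma coeff_coeffMap (T : A →ₗ[R] A) (p : A[X]) (m : ℕ) :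
    (coeffMap T p).coeff m = T (p.coeff m) := by
  induction p using Polynomial.induction_on' with
  | add p q hp hq => simp only [map_add, coeff_add, hp, hq]
  | monomial k a =>
    rw [coeffMap_monomial, coeff_monomial, coeff_monomial]
    split_ifs <;> simp

lemma eval_coeffMap (T : A →ₗ[R] A) (t : R) (p : A[X]) :
    (coeffMap T p).eval (algebraMap R A t) = T (p.eval (algebraMap R A t)) := by
  induction p using Polynomial.induction_on' with
  | add p q hp hq => simp only [map_add, eval_add, hp, hq]
  | monomial k a =>
    rw [coeffMap_monomial, eval_monomial, eval_monomial, ← map_pow, ← Algebra.commutes,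
      ← Algebra.commutes, ← Algebra.smul_def, ← Algebra.smul_def, map_smul]

variable (c : ℕ → R) (T : A →ₗ[R] A) (u : A)

/-- The polynomial in `t` whose value at `t` is `matsunoSeq c T (t • u) n`. -/
noncomputable def matsunoPoly (n : ℕ) : A[X] := matsunoSeq c (coeffMap T) (C u * X) n

lemma eval_matsunoPoly (t : R) (n : ℕ) :
    (matsunoPoly c T u n).eval (algebraMap R A t) = matsunoSeq c T (t • u) n := by
  let φ : A[X] →ₐ[R] A := (aeval (algebraMap R A t)).restrictScalars R
  have hφ (p) : φ p = p.eval (algebraMap R A t) := congrFun (coe_aeval_eq_eval _) p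
  rw [matsunoPoly, ← hφ, map_matsunoSeq φ (T' := T) (fun p => by rw [hφ, hφ, eval_coeffMap]),
    hφ, eval_mul, eval_C, eval_X, mul_comm, ← Algebra.smul_def]

lemma matsunoPoly_add_two (n : ℕ) :
    matsunoPoly c T u (n + 2) = coeffMap T (matsunoPoly c T u (n + 1)) +
      ∑ k ∈ Finset.Icc 2 (n + 2), c k • ∑ j ∈ posTuples k (n + 2), ∏ i, matsunoPoly c T u (j i) :=
  matsunoSeq_add_two c (coeffMap T) (C u * X) n

lemma X_dvd_matsunoPoly (n : ℕ) : X ∣ matsunoPoly c T u n := by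
  induction n using Nat.strong_induction_on with
  | _ n ih =>
    match n with
    | 0 => simp [matsunoPoly, matsunoSeq]
    | 1 => simp [matsunoPoly, matsunoSeq]
    | n + 2 =>
      rw [matsunoPoly_add_two]
      refine dvd_add ?_ (Finset.dvd_sum fun k hk => dvd_smul_of_dvd _ <|
        Finset.dvd_sum fun j hj => ?_)
      · rw [X_dvd_iff, coeff_coeffMap, X_dvd_iff.1 (ih (n + 1) (by lia)), map_zero]
      · have hk2 := (Finset.mem_Icc.1 hk).1
        exact (ih _ (lt_of_mem_posTuples hk2 hj ⟨0, by lia⟩)).trans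
          (Finset.dvd_prod_of_mem _ (Finset.mem_univ _))

lemma coeff_prod_matsunoPoly_of_lt {m k : ℕ} (h : m < k) (j : Fin k → ℕ) :
    (∏ i, matsunoPoly c T u (j i)).coeff m = 0 := by
  have hX : X ^ k ∣ ∏ i, matsunoPoly c T u (j i) := by
    simpa using Finset.prod_dvd_prod_of_dvd (s := Finset.univ) (fun _ : Fin k => X)
      (fun i => matsunoPoly c T u (j i)) fun i _ => X_dvd_matsunoPoly c T u (j i)
  exact X_pow_dvd_iff.1 hX m h

/-- The part of `matsunoSeq c T u n` that is homogeneous of degree `m` in `u`. -/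
noncomputable def matsunoComponent (n m : ℕ) : A := (matsunoPoly c T u n).coeff m

lemma matsunoComponent_one (m : ℕ) :
    matsunoComponent c T u 1 m = if m = 1 then u else 0 := by
  simp [matsunoComponent, matsunoPoly, matsunoSeq, coeff_X, eq_comm]

lemma matsunoComponent_zero_right (n : ℕ) : matsunoComponent c T u n 0 = 0 :=
  X_dvd_iff.1 (X_dvd_matsunoPoly c T u n)

lemma matsunoComponent_add_two (n m : ℕ) :
    matsunoComponent c T u (n + 2) m = T (matsunoComponent c T u (n + 1) m) +
      ∑ k ∈ Finset.Icc 2 m, c k • ∑ j ∈ posTuples k (n + 2),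
        (∏ i, matsunoPoly c T u (j i)).coeff m := by
  rw [matsunoComponent, matsunoPoly_add_two, coeff_add, coeff_coeffMap, finsetSum_coeff]
  simp only [coeff_smul, finsetSum_coeff]
  refine congrArg _ (Finset.sum_congr_of_eq_on_inter (fun k hk hkm => ?_) (fun k hk hkn => ?_)
    fun k _ _ => rfl)
  · have hmk : m < k := by simp only [Finset.mem_Icc] at hk hkm; lia
    rw [Finset.sum_eq_zero fun j _ => coeff_prod_matsunoPoly_of_lt c T u hmk j, smul_zero]
  · have hnk : posTuples k (n + 2) = ∅ := Finset.eq_empty_of_forall_notMem fun j hj => by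
      have := card_le_of_mem_posTuples hj
      simp only [Finset.mem_Icc] at hk hkn
      lia
    rw [hnk, Finset.sum_empty, smul_zero]

lemma matsunoComponent_linear {n : ℕ} (hn : 1 ≤ n) :
    matsunoComponent c T u n 1 = (T ^ (n - 1)) u := by
  induction n, hn using Nat.le_induction with
  | base => simp [matsunoComponent_one]
  | succ n hn ih =>
    obtain ⟨n, rfl⟩ := Nat.exists_eq_add_of_le' hn
    simpa [ih, pow_succ'] using matsunoComponent_add_two c T u n 1

lemma matsunoComponent_quadratic (n : ℕ) :
    matsunoComponent c T u (n + 2) 2 = T (matsunoComponent c T u (n + 1) 2) +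
      c 2 • ∑ j ∈ posTuples 2 (n + 2),
        matsunoComponent c T u (j 0) 1 * matsunoComponent c T u (j 1) 1 := by
  have h0 (n) : (matsunoPoly c T u n).coeff 0 = 0 := matsunoComponent_zero_right c T u n
  rw [matsunoComponent_add_two, Finset.Icc_self, Finset.sum_singleton]
  simp [matsunoComponent, Fin.prod_univ_two, coeff_mul, Finset.Nat.antidiagonal_succ, h0]

lemma matsunoComponent_cubic (n : ℕ) :
    matsunoComponent c T u (n + 2) 3 = T (matsunoComponent c T u (n + 1) 3) +
      (c 2 • ∑ j ∈ posTuples 2 (n + 2),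
          (matsunoComponent c T u (j 0) 1 * matsunoComponent c T u (j 1) 2 +
            matsunoComponent c T u (j 1) 1 * matsunoComponent c T u (j 0) 2) +
        c 3 • ∑ j ∈ posTuples 3 (n + 2), matsunoComponent c T u (j 0) 1 *
          matsunoComponent c T u (j 1) 1 * matsunoComponent c T u (j 2) 1) := by
  have h0 (n) : (matsunoPoly c T u n).coeff 0 = 0 := matsunoComponent_zero_right c T u n
  have h23 : Finset.Icc 2 3 = {2, 3} := rfl
  rw [matsunoComponent_add_two, h23, Finset.sum_pair (by norm_num)]
  simp [matsunoComponent, Fin.prod_univ_two, Fin.prod_univ_three, coeff_mul,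
    Finset.Nat.antidiagonal_succ, h0, mul_comm]

end Components

section CubicForms

variable {R A M : Type*} [CommSemiring R] [CommSemiring A] [Algebra R A] [AddCommMonoid M]
  [Module R M]

/-- The span of the cubic maps `u ↦ L (P₀ u * P₁ u * P₂ u)` with `Pᵣ` of order `eᵣ`, i.e. in
`V eᵣ`, and total order `e₀ + e₁ + e₂ = d`. -/
def cubicForms (L : A →ₗ[R] M) (V : ℕ → Set (Module.End R A)) (d : ℕ) : Submodule R (A → M) :=
  Submodule.span R {F | ∃ (e : Fin 3 → ℕ) (P : Fin 3 → Module.End R A),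
    e 0 + e 1 + e 2 = d ∧ (∀ r, P r ∈ V (e r)) ∧ F = fun u => L (P 0 u * P 1 u * P 2 u)}

variable {L : A →ₗ[R] M} {V : ℕ → Set (Module.End R A)} {T T' : Module.End R A}

lemma apply_mul_mem_cubicForms {d i j k : ℕ} (h : i + j + k = d) {P Q S : Module.End R A}
    (hP : P ∈ V i) (hQ : Q ∈ V j) (hS : S ∈ V k) :
    (fun u => L (P u * Q u * S u)) ∈ cubicForms L V d :=
  Submodule.subset_span ⟨![i, j, k], ![P, Q, S], h, by simp [Fin.forall_fin_succ, hP, hQ, hS], rfl⟩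

lemma pow_mem_of_forall_mul_mem (hone : 1 ∈ V 0) (hT : ∀ j, ∀ P ∈ V j, T * P ∈ V (j + 1))
    (n : ℕ) : T ^ n ∈ V n := by
  induction n with
  | zero => simpa using hone
  | succ n ih => simpa only [pow_succ'] using hT n _ ih

lemma apply_mul_quadratic_mem_cubicForms (c : ℕ → R) (hone : 1 ∈ V 0)
    (hT : ∀ j, ∀ P ∈ V j, T * P ∈ V (j + 1)) (hT' : ∀ j, ∀ P ∈ V j, T' * P ∈ V (j + 1))
    (htranspose : ∀ f g, L (f * T g) = L (T' f * g)) {n : ℕ} (hn : 1 ≤ n) {d e : ℕ}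
    (hd : e + n = d + 2) {P : Module.End R A} (hP : P ∈ V e) :
    (fun u => L (P u * matsunoComponent c T u n 2)) ∈ cubicForms L V d := by
  induction n, hn using Nat.le_induction generalizing e P with
  | base =>
    have hzero : (fun u => L (P u * matsunoComponent c T u 1 2)) = 0 := by
      funext u
      simp [matsunoComponent_one]
    exact hzero ▸ zero_mem _
  | succ n hn ih =>
    obtain ⟨n, rfl⟩ := Nat.exists_eq_add_of_le' hn
    have key : (fun u => L (P u * matsunoComponent c T u (n + 2) 2)) =
        (fun u => L ((T' * P) u * matsunoComponent c T u (n + 1) 2)) +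
          c 2 • ∑ j ∈ posTuples 2 (n + 2), fun u => L (P u *
            matsunoComponent c T u (j 0) 1 * matsunoComponent c T u (j 1) 1) := by
      funext u
      simp only [matsunoComponent_quadratic, mul_add, map_add, htranspose, mul_smul_comm, map_smul,
        Finset.mul_sum, map_sum, Pi.add_apply, Pi.smul_apply, Finset.sum_apply, mul_assoc,
        Module.End.mul_apply]
    rw [key]
    refine add_mem (ih (by lia) (hT' e P hP)) (Submodule.smul_mem _ _ (sum_mem fun j hj => ?_))
    obtain ⟨hsum, hpos⟩ := mem_posTuples.1 hj
    rw [Fin.sum_univ_two] at hsum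
    have := hpos 0
    have := hpos 1
    simp only [matsunoComponent_linear c T _ (hpos _)]
    exact apply_mul_mem_cubicForms (by lia) hP (pow_mem_of_forall_mul_mem hone hT _)
      (pow_mem_of_forall_mul_mem hone hT _)

lemma apply_cubic_mem_cubicForms (c : ℕ → R) (hone : 1 ∈ V 0)
    (hT : ∀ j, ∀ P ∈ V j, T * P ∈ V (j + 1)) (hT' : ∀ j, ∀ P ∈ V j, T' * P ∈ V (j + 1))
    (htranspose : ∀ f g, L (f * T g) = L (T' f * g)) (hLT : ∀ f, L (T f) = 0) (d : ℕ) :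
    (fun u => L (matsunoComponent c T u (d + 3) 3)) ∈ cubicForms L V d := by
  have key : (fun u => L (matsunoComponent c T u (d + 3) 3)) =
      c 2 • ∑ j ∈ posTuples 2 (d + 3),
        ((fun u => L (matsunoComponent c T u (j 0) 1 * matsunoComponent c T u (j 1) 2)) +
          fun u => L (matsunoComponent c T u (j 1) 1 * matsunoComponent c T u (j 0) 2)) +
      c 3 • ∑ j ∈ posTuples 3 (d + 3), fun u => L (matsunoComponent c T u (j 0) 1 *
        matsunoComponent c T u (j 1) 1 * matsunoComponent c T u (j 2) 1) := by
    funext u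
    rw [matsunoComponent_cubic, map_add, hLT, zero_add]
    simp only [map_add, map_smul, map_sum, Pi.add_apply, Pi.smul_apply, Finset.sum_apply]
  have hpow := pow_mem_of_forall_mul_mem hone hT
  rw [key]
  refine add_mem (Submodule.smul_mem _ _ (sum_mem fun j hj => ?_))
    (Submodule.smul_mem _ _ (sum_mem fun j hj => ?_)) <;>
  obtain ⟨hsum, hpos⟩ := mem_posTuples.1 hj <;>
  simp only [matsunoComponent_linear c T _ (hpos _)]
  · rw [Fin.sum_univ_two] at hsum
    have := hpos 0
    have := hpos 1
    exact add_mem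
      (apply_mul_quadratic_mem_cubicForms c hone hT hT' htranspose (hpos 1) (by lia) (hpow _))
      (apply_mul_quadratic_mem_cubicForms c hone hT hT' htranspose (hpos 0) (by lia) (hpow _))
  · rw [Fin.sum_univ_three] at hsum
    have := hpos 0
    have := hpos 1
    have := hpos 2
    exact apply_mul_mem_cubicForms (by lia) (hpow _) (hpow _) (hpow _)

lemma exists_sum_of_mem_cubicForms {d : ℕ} {F : A → M}
    (hsmul : ∀ j (r : R), ∀ P ∈ V j, r • P ∈ V j) (hF : F ∈ cubicForms L V d) :
    ∃ (N : ℕ) (e : Fin N → Fin 3 → ℕ) (P : Fin N → Fin 3 → Module.End R A),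
      (∀ i, e i 0 + e i 1 + e i 2 = d) ∧ (∀ i r, P i r ∈ V (e i r)) ∧
        ∀ u, F u = ∑ i, L (P i 0 u * P i 1 u * P i 2 u) := by
  obtain ⟨N, r, G, rfl⟩ := Submodule.mem_span_set'.1 hF
  choose e P he hP hG using fun i => (G i).2
  refine ⟨N, e, fun i => ![r i • P i 0, P i 1, P i 2], he, fun i => ?_, fun u => ?_⟩
  · simp [Fin.forall_fin_succ, hsmul, hP]
  · simp [Finset.sum_apply, hG]

end CubicForms

section FourierSeries

local instance factTwoPiPos : Fact (0 < 2 * Real.pi) := ⟨Real.two_pi_pos⟩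

/-- The Fourier mode `x ↦ e^{inx}`, as the pullback to `ℝ` of the monomial `fourier n` on the circle
`ℝ / 2πℤ`. -/
noncomputable def fourierMode (n : ℤ) (x : ℝ) : ℂ := fourier n (x : AddCircle (2 * Real.pi))

lemma fourierMode_eq_exp (n : ℤ) (x : ℝ) : fourierMode n x = Complex.exp (Complex.I * n * x) := by
  have hpi : (Real.pi : ℂ) ≠ 0 := Complex.ofReal_ne_zero.2 Real.pi_ne_zero
  rw [fourierMode, fourier_coe_apply]
  congr 1
  push_cast
  field_simp

lemma periodic_fourierMode (n : ℤ) : Function.Periodic (fourierMode n) (2 * Real.pi) := fun x => by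
  simp only [fourierMode, AddCircle.coe_add_period]

lemma norm_fourierMode (n : ℤ) (x : ℝ) : ‖fourierMode n x‖ = 1 := Circle.norm_coe _

lemma hasDerivAt_fourierMode (n : ℤ) (x : ℝ) :
    HasDerivAt (fourierMode n) (Complex.I * n * fourierMode n x) x := by
  have hpi : (Real.pi : ℂ) ≠ 0 := Complex.ofReal_ne_zero.2 Real.pi_ne_zero
  refine (hasDerivAt_fourier (2 * Real.pi) n x).congr_deriv ?_
  rw [fourierMode]
  push_cast
  field_simp

lemma contDiff_fourierMode (n : ℤ) : ContDiff ℝ (⊤ : ℕ∞) (fourierMode n) := by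
  have h : ContDiff ℝ (⊤ : ℕ∞) fun x : ℝ => (x : ℂ) := Complex.ofRealCLM.contDiff
  simpa only [funext (fourierMode_eq_exp n)] using (contDiff_const.mul h).cexp

lemma iteratedDeriv_fourierMode (k : ℕ) (n : ℤ) :
    iteratedDeriv k (fourierMode n) = fun x => (Complex.I * n) ^ k * fourierMode n x := by
  induction k with
  | zero => simp
  | succ k ih =>
    funext x
    rw [iteratedDeriv_succ, ih, ((hasDerivAt_fourierMode n x).const_mul _).deriv]
    ring

lemma two_pi_mul_fourierCoef (f : ℝ → ℂ) (n : ℤ) :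
    2 * Real.pi * fourierCoef f n = ∫ x in (0 : ℝ)..(2 * Real.pi), f x * fourierMode (-n) x := by
  have hpi : (Real.pi : ℂ) ≠ 0 := Complex.ofReal_ne_zero.2 Real.pi_ne_zero
  simp only [fourierMode_eq_exp, Int.cast_neg, mul_neg, ← neg_mul, fourierCoef]
  field_simp

lemma fourierCoef_comp_coe (F : AddCircle (2 * Real.pi) → ℂ) (n : ℤ) :
    fourierCoef (fun x => F x) n = fourierCoeff F n := by
  have hpi : (2 * Real.pi : ℂ) ≠ 0 := by exact_mod_cast Real.two_pi_pos.ne'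
  rw [fourierCoeff_eq_intervalIntegral F n 0, zero_add, ← mul_right_inj' hpi,
    two_pi_mul_fourierCoef, Complex.real_smul]
  push_cast
  rw [one_div, mul_inv_cancel_left₀ hpi]
  simp only [fourierMode, smul_eq_mul, mul_comm]

lemma fourierCoef_fourierMode (n k : ℤ) :
    fourierCoef (fourierMode n) k = if k = n then 1 else 0 := by
  have h := fourierCoef_comp_coe (fourier n) k
  rwa [fourierCoeff_fourier, Pi.single_apply] at h

/-- The sum `x ↦ ∑ₙ cₙ e^{inx}`. -/
noncomputable def fourierSum (c : ℤ → ℂ) (x : ℝ) : ℂ := ∑' n, c n * fourierMode n x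

variable {c : ℤ → ℂ}

lemma periodic_fourierSum (c : ℤ → ℂ) : Function.Periodic (fourierSum c) (2 * Real.pi) := by
  intro x
  simp only [fourierSum, periodic_fourierMode _ x]

lemma contDiff_fourierSum (hc : ∀ k : ℕ, Summable fun n : ℤ => (Complex.I * n) ^ k * c n) :
    ContDiff ℝ (⊤ : ℕ∞) (fourierSum c) := by
  refine contDiff_tsum (v := fun k n => ‖(Complex.I * n) ^ k * c n‖)
    (fun n => contDiff_const.mul (contDiff_fourierMode n)) (fun k _ => (hc k).norm)
    fun k n x _ => ?_
  rw [norm_iteratedFDeriv_eq_norm_iteratedDeriv, iteratedDeriv_const_mul_field,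
    iteratedDeriv_fourierMode, norm_mul, norm_mul, norm_mul, norm_fourierMode, mul_one, mul_comm]

lemma hasSum_integral_fourierSum_mul (hc : Summable c) {g : ℝ → ℂ} (hg : Continuous g) :
    HasSum (fun n => c n * (2 * Real.pi * fourierCoef g (-n)))
      (∫ x in (0 : ℝ)..(2 * Real.pi), fourierSum c x * g x) := by
  obtain ⟨C, hC⟩ := (isCompact_uIcc (a := (0 : ℝ)) (b := 2 * Real.pi)).exists_bound_of_continuousOn
    hg.continuousOn
  have hterm (n : ℤ) (x : ℝ) : ‖c n * fourierMode n x‖ = ‖c n‖ := by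
    rw [norm_mul, norm_fourierMode, mul_one]
  have hmode (n : ℤ) := (contDiff_fourierMode n).continuous
  have key := intervalIntegral.hasSum_integral_of_dominated_convergence (a := 0)
    (b := 2 * Real.pi) (μ := MeasureTheory.volume)
    (F := fun n x => c n * fourierMode n x * g x) (f := fun x => fourierSum c x * g x)
    (fun n _ => ‖c n‖ * C)
    (fun n => ((continuous_const.mul (hmode n)).mul hg).aestronglyMeasurable)
    (fun n => .of_forall fun x hx => ?_)
    (.of_forall fun x _ => hc.norm.mul_right C) (by simp)
    (.of_forall fun x _ => ?_)
  · refine key.congr_fun fun n => ?_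
    simp only [two_pi_mul_fourierCoef g (-n), neg_neg, mul_assoc (c n), mul_comm (g _),
      intervalIntegral.integral_const_mul]
  · rw [norm_mul, hterm]
    gcongr
    exact hC x (Set.uIoc_subset_uIcc hx)
  · have hsum : Summable fun n => c n * fourierMode n x :=
      .of_norm (by simpa only [hterm] using hc.norm)
    exact hsum.hasSum.mul_right (g x)

lemma fourierCoef_fourierSum (hc : Summable c) (n : ℤ) : fourierCoef (fourierSum c) n = c n := by
  have hpi : (2 * Real.pi : ℂ) ≠ 0 := by exact_mod_cast Real.two_pi_pos.ne'
  have h := hasSum_integral_fourierSum_mul hc (contDiff_fourierMode (-n)).continuous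
  rw [← mul_right_inj' hpi, two_pi_mul_fourierCoef, h.unique (hasSum_single n fun k hk => ?_)]
  · rw [fourierCoef_fourierMode, if_pos rfl, mul_one, mul_comm]
  · rw [fourierCoef_fourierMode, if_neg (by simpa using hk), mul_zero, mul_zero]

lemma fourierSum_fourierCoef {f : ℝ → ℂ} (hf : Continuous f)
    (hper : Function.Periodic f (2 * Real.pi)) (hsum : Summable (fourierCoef f)) :
    fourierSum (fourierCoef f) = f := by
  let F : C(AddCircle (2 * Real.pi), ℂ) := ⟨hper.lift, continuous_coinduced_dom.2 hf⟩
  have hcoeff : fourierCoeff F = fourierCoef f := funext fun n => (fourierCoef_comp_coe F n).symm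
  funext x
  have h := has_pointwise_sum_fourier_series_of_summable (f := F) (hcoeff ▸ hsum) (x : AddCircle _)
  simp only [hcoeff, smul_eq_mul] at h
  exact h.tsum_eq

lemma exists_norm_fourierCoef_le {f : ℝ → ℂ} (hf : Continuous f) :
    ∃ C, ∀ n, ‖fourierCoef f n‖ ≤ C := by
  obtain ⟨C, hC⟩ := (isCompact_uIcc (a := (0 : ℝ)) (b := 2 * Real.pi)).exists_bound_of_continuousOn
    hf.continuousOn
  refine ⟨C, fun n => ?_⟩
  have hpi : 0 < 2 * Real.pi := Real.two_pi_pos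
  have h : ‖2 * Real.pi * fourierCoef f n‖ ≤ C * |2 * Real.pi - 0| := by
    rw [two_pi_mul_fourierCoef]
    refine intervalIntegral.norm_integral_le_of_norm_le_const fun x hx => ?_
    rw [norm_mul, norm_fourierMode, mul_one]
    exact hC x (Set.uIoc_subset_uIcc hx)
  rw [norm_mul, sub_zero, abs_of_pos hpi, mul_comm C] at h
  exact le_of_mul_le_mul_left (by simpa [abs_of_pos Real.pi_pos] using h) hpi

end FourierSeries

/-- The algebra of smooth complex-valued `2π`-periodic functions on `ℝ`. -/
def smoothPeriodic : Subalgebra ℂ (ℝ → ℂ) where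
  carrier := {f | ContDiff ℝ (⊤ : ℕ∞) f ∧ Function.Periodic f (2 * Real.pi)}
  mul_mem' hf hg := ⟨hf.1.mul hg.1, hf.2.mul hg.2⟩
  add_mem' hf hg := ⟨hf.1.add hg.1, hf.2.add hg.2⟩
  algebraMap_mem' _ := ⟨contDiff_const, fun _ => rfl⟩

namespace smoothPeriodic

lemma continuous_coe (f : smoothPeriodic) : Continuous (f : ℝ → ℂ) := f.2.1.continuous

lemma hasDerivAt_coe (f : smoothPeriodic) (x : ℝ) :
    HasDerivAt (f : ℝ → ℂ) (deriv (f : ℝ → ℂ) x) x :=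
  ((contDiff_infty_iff_deriv.1 f.2.1).1 x).hasDerivAt

/-- The derivative `∂ₓ` as an operator on smooth periodic functions. -/
noncomputable def derivative : Module.End ℂ smoothPeriodic where
  toFun f := ⟨deriv f, (contDiff_infty_iff_deriv.1 f.2.1).2, fun x => by
    rw [← deriv_comp_add_const, funext f.2.2]⟩
  map_add' f g := Subtype.ext <| funext fun x =>
    ((hasDerivAt_coe f x).add (hasDerivAt_coe g x)).deriv
  map_smul' c f := Subtype.ext <| funext fun x => ((hasDerivAt_coe f x).const_mul c).deriv

lemma coe_derivative (f : smoothPeriodic) : (derivative f : ℝ → ℂ) = deriv f := rfl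

lemma coe_derivative_pow (k : ℕ) (f : smoothPeriodic) :
    ((derivative ^ k) f : ℝ → ℂ) = deriv^[k] f := by
  induction k with
  | zero => rfl
  | succ k ih =>
    rw [pow_succ', Module.End.mul_apply, coe_derivative, ih, Function.iterate_succ_apply']

lemma derivative_mul (f g : smoothPeriodic) :
    derivative (f * g) = derivative f * g + f * derivative g :=
  Subtype.ext <| funext fun x => ((hasDerivAt_coe f x).mul (hasDerivAt_coe g x)).deriv

/-- The linear form `f ↦ ∫₀^{2π} f`. -/
noncomputable def integral : smoothPeriodic →ₗ[ℂ] ℂ where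
  toFun f := ∫ x in (0 : ℝ)..(2 * Real.pi), (f : ℝ → ℂ) x
  map_add' f g := intervalIntegral.integral_add ((continuous_coe f).intervalIntegrable _ _)
    ((continuous_coe g).intervalIntegrable _ _)
  map_smul' c _ := intervalIntegral.integral_const_mul c _

lemma integral_apply (f : smoothPeriodic) :
    integral f = ∫ x in (0 : ℝ)..(2 * Real.pi), (f : ℝ → ℂ) x := rfl

lemma integral_derivative (f : smoothPeriodic) : integral (derivative f) = 0 := by
  have hf : (f : ℝ → ℂ) (2 * Real.pi) = (f : ℝ → ℂ) 0 := by simpa using f.2.2 0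
  rw [integral_apply, coe_derivative, intervalIntegral.integral_deriv_eq_sub
    (fun x _ => (hasDerivAt_coe f x).differentiableAt)
    ((continuous_coe (derivative f)).intervalIntegrable _ _), hf, sub_self]

/-- The Fourier mode `x ↦ e^{inx}` as a smooth periodic function. -/
noncomputable def mode (n : ℤ) : smoothPeriodic :=
  ⟨fourierMode n, contDiff_fourierMode n, periodic_fourierMode n⟩

lemma derivative_mode (n : ℤ) : derivative (mode n) = (Complex.I * n) • mode n :=
  Subtype.ext <| funext fun x => (hasDerivAt_fourierMode n x).deriv

/-- The `n`-th Fourier coefficient as a linear form. -/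
noncomputable def coef (n : ℤ) : smoothPeriodic →ₗ[ℂ] ℂ :=
  (2 * Real.pi : ℂ)⁻¹ • integral ∘ₗ LinearMap.mulRight ℂ (mode (-n))

lemma coef_eq_integral (n : ℤ) (f : smoothPeriodic) :
    coef n f = (2 * Real.pi : ℂ)⁻¹ * integral (f * mode (-n)) := rfl

lemma coef_apply (n : ℤ) (f : smoothPeriodic) : coef n f = fourierCoef f n := by
  have hpi : (2 * Real.pi : ℂ) ≠ 0 := by exact_mod_cast Real.two_pi_pos.ne'
  rw [coef_eq_integral, inv_mul_eq_iff_eq_mul₀ hpi, two_pi_mul_fourierCoef]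
  rfl

lemma coef_derivative (n : ℤ) (f : smoothPeriodic) :
    coef n (derivative f) = Complex.I * n * coef n f := by
  have h := integral_derivative (f * mode (-n))
  rw [derivative_mul, derivative_mode, mul_smul_comm, map_add, map_smul, smul_eq_mul] at h
  rw [coef_eq_integral, coef_eq_integral, eq_neg_of_add_eq_zero_left h]
  push_cast
  ring

-- Two integrations by parts give coefficients of order `n⁻²`.
lemma summable_coef (f : smoothPeriodic) : Summable fun n => coef n f := by
  obtain ⟨C, hC⟩ := exists_norm_fourierCoef_le (continuous_coe (derivative (derivative f)))
  refine Summable.of_norm_bounded_eventually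
    ((Real.summable_one_div_int_pow.2 one_lt_two).mul_left C) ?_
  filter_upwards [(Set.finite_singleton (0 : ℤ)).compl_mem_cofinite] with n hn
  have hn0 : (n : ℝ) ≠ 0 := by exact_mod_cast hn
  have h := hC n
  rw [← coef_apply, coef_derivative, coef_derivative, ← mul_assoc, norm_mul] at h
  rw [mul_one_div, le_div_iff₀ (by positivity)]
  simpa [← sq, mul_comm] using h

lemma fourierSum_coef (f : smoothPeriodic) : fourierSum (fun n => coef n f) = f := by
  have hsum := summable_coef f
  simp only [coef_apply] at hsum ⊢
  exact fourierSum_fourierCoef (continuous_coe f) f.2.2 hsum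

lemma ext_coef {f g : smoothPeriodic} (h : ∀ n, coef n f = coef n g) : f = g :=
  Subtype.ext <| by rw [← fourierSum_coef f, ← fourierSum_coef g, funext h]

lemma hasSum_integral_mul (f g : smoothPeriodic) :
    HasSum (fun n => coef n f * (2 * Real.pi * coef (-n) g)) (integral (f * g)) := by
  have h := hasSum_integral_fourierSum_mul (summable_coef f) (continuous_coe g)
  simp only [← coef_apply, fourierSum_coef] at h
  exact h

/-- `S` acts on the `n`-th Fourier coefficient as multiplication by `m n`. -/
def HasSymbol (S : Module.End ℂ smoothPeriodic) (m : ℤ → ℂ) : Prop :=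
  ∀ n f, coef n (S f) = m n * coef n f

namespace HasSymbol

variable {S S' : Module.End ℂ smoothPeriodic} {m m' : ℤ → ℂ}

lemma one : HasSymbol 1 1 := fun n f => by simp

lemma derivative : HasSymbol derivative fun n => Complex.I * n := coef_derivative

lemma add (h : HasSymbol S m) (h' : HasSymbol S' m') : HasSymbol (S + S') (m + m') := fun n f => by
  rw [LinearMap.add_apply, map_add, h, h', Pi.add_apply, add_mul]

lemma smul (c : ℂ) (h : HasSymbol S m) : HasSymbol (c • S) (c • m) := fun n f => by
  rw [LinearMap.smul_apply, map_smul, h, Pi.smul_apply, smul_eq_mul, smul_eq_mul, mul_assoc]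

lemma mul (h : HasSymbol S m) (h' : HasSymbol S' m') : HasSymbol (S * S') (m * m') := fun n f => by
  rw [Module.End.mul_apply, h, h', Pi.mul_apply, mul_assoc]

lemma pow (h : HasSymbol S m) (k : ℕ) : HasSymbol (S ^ k) (m ^ k) := by
  induction k with
  | zero => simpa only [pow_zero] using one
  | succ k ih => simpa only [pow_succ] using ih.mul h

lemma eq (h : HasSymbol S m) (h' : HasSymbol S' m') (hm : ∀ n, m n = m' n) : S = S' :=
  LinearMap.ext fun f => ext_coef fun n => by rw [h, h', hm]

lemma integral_mul_apply (h : HasSymbol S m) (h' : HasSymbol S' m') (hm : ∀ n, m (-n) = m' n)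
    (f g : smoothPeriodic) : integral (f * S g) = integral (S' f * g) := by
  refine (hasSum_integral_mul f (S g)).unique
    ((hasSum_integral_mul (S' f) g).congr_fun fun n => ?_)
  rw [h, h', hm]
  ring

end HasSymbol

/-- The smooth periodic function `∑ₙ cₙ e^{inx}` with rapidly decreasing coefficients `c`. -/
noncomputable def ofCoef (c : ℤ → ℂ)
    (hc : ∀ k : ℕ, Summable fun n : ℤ => (Complex.I * n) ^ k * c n) : smoothPeriodic :=
  ⟨fourierSum c, contDiff_fourierSum hc, periodic_fourierSum c⟩

lemma coef_ofCoef {c : ℤ → ℂ} (hc : ∀ k : ℕ, Summable fun n : ℤ => (Complex.I * n) ^ k * c n)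
    (n : ℤ) : coef n (ofCoef c hc) = c n :=
  (coef_apply n _).trans (fourierCoef_fourierSum (by simpa using hc 0) n)

section FourierMultiplier

open scoped BoundedContinuousFunction

lemma summable_pow_mul_mul_coef (m : ℤ →ᵇ ℂ) (f : smoothPeriodic) (k : ℕ) :
    Summable fun n : ℤ => (Complex.I * n) ^ k * (m n * coef n f) := by
  refine .of_norm_bounded ((summable_coef ((derivative ^ k) f)).norm.mul_left ‖m‖) fun n => ?_
  rw [HasSymbol.derivative.pow k n f, mul_left_comm, norm_mul]
  exact mul_le_mul_of_nonneg_right (m.norm_coe_le_norm n) (norm_nonneg _)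

/-- The Fourier multiplier with bounded symbol `m`. -/
noncomputable def fourierMult (m : ℤ →ᵇ ℂ) : Module.End ℂ smoothPeriodic where
  toFun f := ofCoef (fun n => m n * coef n f) (summable_pow_mul_mul_coef m f)
  map_add' f g := ext_coef fun n => by simp only [coef_ofCoef, map_add, mul_add]
  map_smul' c f := ext_coef fun n => by
    simp only [coef_ofCoef, map_smul, smul_eq_mul, RingHom.id_apply, mul_left_comm]

lemma HasSymbol.fourierMult (m : ℤ →ᵇ ℂ) : HasSymbol (fourierMult m) m :=
  fun _ f => coef_ofCoef (summable_pow_mul_mul_coef m f) _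

lemma coe_fourierMult (m : ℤ →ᵇ ℂ) (f : smoothPeriodic) :
    (fourierMult m f : ℝ → ℂ) = fourierSum fun n => m n * fourierCoef f n := by
  simp only [← coef_apply]
  rfl

/-- The Hilbert transform `HilbT` on smooth periodic functions. -/
noncomputable def hilbert : Module.End ℂ smoothPeriodic :=
  fourierMult <| .ofNormedAddCommGroupDiscrete (fun n : ℤ => -Complex.I * n.sign) 1 fun n => by
    obtain h | rfl | h := lt_trichotomy n 0 <;>
      simp [Int.sign_eq_neg_one_of_neg, Int.sign_eq_one_of_pos, *]

lemma HasSymbol.hilbert : HasSymbol hilbert fun n => -Complex.I * n.sign := .fourierMult _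

lemma coe_hilbert (f : smoothPeriodic) : (hilbert f : ℝ → ℂ) = HilbT f := by
  funext x
  simp [hilbert, coe_fourierMult, HilbT, fourierSum, fourierMode_eq_exp]

/-- The projection `Pminus` onto negative modes, on smooth periodic functions. -/
noncomputable def projNeg : Module.End ℂ smoothPeriodic :=
  fourierMult <| .ofNormedAddCommGroupDiscrete (fun n : ℤ => if n < 0 then 1 else 0) 1 fun n => by
    split_ifs <;> simp

lemma HasSymbol.projNeg : HasSymbol projNeg fun n => if n < 0 then 1 else 0 := .fourierMult _

lemma coe_projNeg (f : smoothPeriodic) : (projNeg f : ℝ → ℂ) = Pminus f := by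
  funext x
  simp [projNeg, coe_fourierMult, Pminus, fourierSum, fourierMode_eq_exp]

end FourierMultiplier

/-- The operator `(a + bH)∂ₓʲ`, i.e. `Lam a b j` on smooth periodic functions. -/
noncomputable def lam (a b : ℂ) (j : ℕ) : Module.End ℂ smoothPeriodic :=
  (a • 1 + b • hilbert) * derivative ^ j

lemma coe_lam (a b : ℂ) (j : ℕ) (f : smoothPeriodic) : (lam a b j f : ℝ → ℂ) = Lam a b j f := by
  funext x
  rw [Lam, ← coe_derivative_pow, ← coe_hilbert]
  rfl

lemma HasSymbol.lam (a b : ℂ) (j : ℕ) : HasSymbol (lam a b j)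
    fun n => (a + b * (-Complex.I * n.sign)) * (Complex.I * n) ^ j := fun n f => by
  have h := ((one.smul a).add (hilbert.smul b)).mul (derivative.pow j) n f
  simp only [Pi.mul_apply, Pi.add_apply, Pi.smul_apply, Pi.pow_apply, Pi.one_apply, smul_eq_mul,
    mul_one] at h
  exact h

lemma lam_one_zero_zero : lam 1 0 0 = 1 := by simp [lam]

lemma smul_lam (c a b : ℂ) (j : ℕ) : c • lam a b j = lam (c * a) (c * b) j := by
  rw [lam, lam, ← smul_mul_assoc, smul_add, smul_smul, smul_smul]

lemma lam_mul_lam (a b a' b' : ℂ) (i j : ℕ) :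
    lam a b (i + 1) * lam a' b' j =
      lam (a * a' - b * b') (a * b' + b * a') (i + 1 + j) := by
  refine ((HasSymbol.lam _ _ _).mul (HasSymbol.lam _ _ _)).eq (HasSymbol.lam _ _ _) fun n => ?_
  simp only [Pi.mul_apply, pow_add, pow_one]
  obtain rfl | hn := eq_or_ne n 0
  · simp
  · have hsign : (n.sign : ℂ) ^ 2 = 1 := by
      obtain h | h := hn.lt_or_gt <;> simp [Int.sign_eq_neg_one_of_neg, Int.sign_eq_one_of_pos, h]
    linear_combination (b * b' * (Complex.I * n) ^ i * (Complex.I * n) * (Complex.I * n) ^ j) *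
      ((n.sign : ℂ) ^ 2 * Complex.I_sq - hsign)

/-- The operator `iP₋∂ₓ` of the Matsuno recursion. -/
noncomputable def matsunoOp : Module.End ℂ smoothPeriodic :=
  Complex.I • (projNeg * derivative)

lemma coe_matsunoOp (f : smoothPeriodic) :
    (matsunoOp f : ℝ → ℂ) = fun x => Complex.I * Pminus (deriv f) x := by
  rw [← coe_derivative, ← coe_projNeg]
  rfl

lemma matsunoOp_eq_lam : matsunoOp = lam (Complex.I / 2) (1 / 2) 1 := by
  refine ((HasSymbol.projNeg.mul HasSymbol.derivative).smul _).eq (HasSymbol.lam _ _ _) fun n => ?_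
  simp only [Pi.smul_apply, Pi.mul_apply, smul_eq_mul, pow_one]
  obtain h | rfl | h := lt_trichotomy n 0
  · rw [if_pos h, Int.sign_eq_neg_one_of_neg h]
    push_cast
    ring
  · simp
  · rw [if_neg h.not_gt, Int.sign_eq_one_of_pos h]
    push_cast
    ring

lemma integral_mul_matsunoOp (f g : smoothPeriodic) :
    integral (f * matsunoOp g) = integral (lam (-Complex.I / 2) (1 / 2) 1 f * g) := by
  rw [matsunoOp_eq_lam]
  refine (HasSymbol.lam _ _ _).integral_mul_apply (HasSymbol.lam _ _ _) (fun n => ?_) f g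
  rw [Int.sign_neg]
  push_cast
  ring

lemma integral_matsunoOp (f : smoothPeriodic) : integral (matsunoOp f) = 0 := by
  have hone : derivative 1 = 0 := Subtype.ext <| funext fun x => deriv_const x 1
  rw [← one_mul (matsunoOp f), integral_mul_matsunoOp]
  simp [lam, hone]

end smoothPeriodic

/-- The coefficient `(-1)ᵏ / k!` of the `k`-fold products in the recursion for the densities. -/
noncomputable def matsunoCoeff (k : ℕ) : ℂ := (-1) ^ k / k.factorial

lemma matsunoW_add_two (u : ℝ → ℂ) (n : ℕ) :
    matsunoW u (n + 2) = (fun x => Complex.I * Pminus (deriv (matsunoW u (n + 1))) x) +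
      ∑ k ∈ Finset.Icc 2 (n + 2), matsunoCoeff k •
        ∑ j ∈ posTuples k (n + 2), ∏ i, matsunoW u (j i) := by
  funext x
  conv_lhs => rw [matsunoW, Nat.strongRecOn_eq]
  rw [if_neg (by lia), if_neg (by lia), sub_eq_add_neg, ← Finset.sum_neg_distrib]
  simp only [Pi.add_apply, Finset.sum_apply, Pi.smul_apply, Finset.prod_apply, smul_eq_mul]
  congr 1
  · simp [matsunoW]
  · refine Finset.sum_congr rfl fun k hk => ?_
    rw [matsunoCoeff, pow_succ, mul_neg_one, neg_div, neg_mul, neg_neg]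
    refine congrArg _ <| Finset.sum_congr rfl fun j hj => Finset.prod_congr rfl fun i _ => ?_
    rw [dif_pos (lt_of_mem_posTuples (Finset.mem_Icc.1 hk).1 hj i)]
    rfl

lemma matsunoW_eq_matsunoSeq (u : ℝ → ℂ) (n : ℕ) :
    matsunoW u n = matsunoSeq matsunoCoeff (fun f x => Complex.I * Pminus (deriv f) x) u n := by
  induction n using Nat.strong_induction_on with
  | _ n ih =>
    match n with
    | 0 =>
      rw [matsunoW, Nat.strongRecOn_eq, matsunoSeq]
      rfl
    | 1 =>
      rw [matsunoW, Nat.strongRecOn_eq, matsunoSeq]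
      rfl
    | n + 2 =>
      rw [matsunoW_add_two, matsunoSeq_add_two, ih (n + 1) (by lia)]
      refine congrArg _ <| Finset.sum_congr rfl fun k hk => congrArg _ <| Finset.sum_congr rfl
        fun j hj => Finset.prod_congr rfl fun i _ => ?_
      exact ih _ (lt_of_mem_posTuples (Finset.mem_Icc.1 hk).1 hj i)

lemma iteratedDeriv_eval_ofReal_zero (p : Polynomial ℂ) (k : ℕ) :
    iteratedDeriv k (fun t : ℝ => p.eval (t : ℂ)) 0 = k.factorial * p.coeff k := by
  have h (k : ℕ) : iteratedDeriv k (fun t : ℝ => p.eval (t : ℂ)) =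
      fun t : ℝ => (Polynomial.derivative^[k] p).eval (t : ℂ) := by
    induction k with
    | zero => simp
    | succ k ih =>
      rw [iteratedDeriv_succ, ih, Function.iterate_succ_apply']
      exact funext fun t => ((Polynomial.derivative^[k] p).hasDerivAt (t : ℂ)).comp_ofReal.deriv
  simp [h, ← Polynomial.coeff_zero_eq_eval_zero, Polynomial.coeff_iterate_derivative,
    Nat.descFactorial_self]

namespace smoothPeriodic

lemma matsunoW_coe (u : smoothPeriodic) (n : ℕ) :
    matsunoW u n = (matsunoSeq matsunoCoeff matsunoOp u n : smoothPeriodic) := by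
  rw [matsunoW_eq_matsunoSeq]
  exact (map_matsunoSeq smoothPeriodic.val (T := matsunoOp)
    (T' := fun f x => Complex.I * Pminus (deriv f) x) coe_matsunoOp
    matsunoCoeff u n).symm

lemma wCub_eq_matsunoComponent (u : smoothPeriodic) (n : ℕ) (x : ℝ) :
    wCub u n x =
      ((matsunoComponent matsunoCoeff matsunoOp u n 3 : smoothPeriodic) : ℝ → ℂ) x := by
  let evalAt : smoothPeriodic →+* ℂ :=
    (Pi.evalRingHom (fun _ : ℝ => ℂ) x).comp smoothPeriodic.val.toRingHom
  have h (t : ℝ) : matsunoW (fun y => (t : ℂ) * (u : ℝ → ℂ) y) n x =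
      ((matsunoPoly matsunoCoeff matsunoOp u n).map evalAt).eval (t : ℂ) := by
    change matsunoW ((t : ℂ) • u : smoothPeriodic) n x = _
    rw [matsunoW_coe, ← eval_matsunoPoly]
    exact (Polynomial.eval_map_apply (f := evalAt) (algebraMap ℂ smoothPeriodic t)).symm
  simp only [wCub, h, iteratedDeriv_eval_ofReal_zero, Polynomial.coeff_map]
  have h6 : (Nat.factorial 3 : ℂ) = 6 := by norm_num [Nat.factorial]
  rw [h6, mul_div_cancel_left₀ _ (by norm_num)]
  rfl

/-- The operators `(a + bH)∂ₓʲ` of order `j`. -/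
def lamOperators (j : ℕ) : Set (Module.End ℂ smoothPeriodic) := {P | ∃ a b, P = lam a b j}

lemma lam_mul_mem_lamOperators (a b : ℂ) (j : ℕ) (P : Module.End ℂ smoothPeriodic)
    (hP : P ∈ lamOperators j) : lam a b 1 * P ∈ lamOperators (j + 1) := by
  obtain ⟨a', b', rfl⟩ := hP
  exact ⟨_, _, (lam_mul_lam a b a' b' 0 j).trans (by rw [zero_add, add_comm 1 j])⟩

lemma smul_mem_lamOperators (j : ℕ) (c : ℂ) (P : Module.End ℂ smoothPeriodic)
    (hP : P ∈ lamOperators j) : c • P ∈ lamOperators j := by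
  obtain ⟨a, b, rfl⟩ := hP
  exact ⟨_, _, smul_lam c a b j⟩

lemma integral_cubic_mem_cubicForms (d : ℕ) :
    (fun u => integral (matsunoComponent matsunoCoeff matsunoOp u (d + 3) 3)) ∈
      cubicForms integral lamOperators d :=
  apply_cubic_mem_cubicForms (V := lamOperators) matsunoCoeff ⟨1, 0, lam_one_zero_zero.symm⟩
    (by rw [matsunoOp_eq_lam]; exact lam_mul_mem_lamOperators _ _) (lam_mul_mem_lamOperators _ _)
    integral_mul_matsunoOp integral_matsunoOp d

end smoothPeriodic

theorem stmt_16_general (n : ℕ) (hn : 3 ≤ n) :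
    ∃ (I : Finset ℕ) (e : ℕ → Fin 3 → ℕ) (a b : ℕ → Fin 3 → ℂ),
      (∀ i ∈ I, e i 0 + e i 1 + e i 2 = n - 3) ∧
      ∀ u : ℝ → ℂ, ContDiff ℝ (⊤ : ℕ∞) u → (∀ x, u (x + 2 * Real.pi) = u x) →
        (∫ x in (0:ℝ)..(2 * Real.pi), wCub u n x)
          = ∑ i ∈ I, ∫ x in (0:ℝ)..(2 * Real.pi),
              Lam (a i 0) (b i 0) (e i 0) u x * Lam (a i 1) (b i 1) (e i 1) u x *
                Lam (a i 2) (b i 2) (e i 2) u x := by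
  obtain ⟨d, rfl⟩ := Nat.exists_eq_add_of_le' hn
  obtain ⟨N, e, P, he, hP, hsum⟩ := exists_sum_of_mem_cubicForms
    smoothPeriodic.smul_mem_lamOperators (smoothPeriodic.integral_cubic_mem_cubicForms d)
  choose a b hab using hP
  have hext {α : Type} (f : Fin N → α) (g : ℕ → α) (i : Fin N) :
      Function.extend Fin.val f g i = f i :=
    Fin.val_injective.extend_apply f g i
  refine ⟨Finset.range N, Function.extend Fin.val e 0, Function.extend Fin.val a 0,
    Function.extend Fin.val b 0, fun i hi => ?_, fun u hu hper => ?_⟩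
  · lift i to Fin N using Finset.mem_range.1 hi
    simpa only [hext, Nat.add_sub_cancel] using he i
  · let v : smoothPeriodic := ⟨u, hu, hper⟩
    have h := hsum v
    simp only [hab, smoothPeriodic.integral_apply, ← smoothPeriodic.wCub_eq_matsunoComponent,
      MulMemClass.coe_mul, smoothPeriodic.coe_lam, Pi.mul_apply] at h
    rw [h, Finset.sum_range]
    simp only [hext, v]

/-- for every `n ≥ 3` there are a finite index set `I` and, for `i ∈ I`,
exponents `e_i : Fin 3 → ℕ` with `e_i 0 + e_i 1 + e_i 2 = n − 3` and constants
`a_i, b_i : Fin 3 → ℂ` such that for every smooth `2π`-periodic zero-mean `u`: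
`∫₀^{2π} w_n^C(u) dx = Σ_{i∈I} ∫₀^{2π} ∏_{r<3} ((a_i r + b_i r·H)∂ₓ^{e_i r} u) dx`. -/
theorem stmt_16 (n : ℕ) (hn : 3 ≤ n) :
    ∃ (I : Finset ℕ) (e : ℕ → Fin 3 → ℕ) (a b : ℕ → Fin 3 → ℂ),
      (∀ i ∈ I, e i 0 + e i 1 + e i 2 = n - 3) ∧
      ∀ u : ℝ → ℂ, ContDiff ℝ (⊤ : ℕ∞) u → (∀ x, u (x + 2 * Real.pi) = u x) →
        (∫ x in (0:ℝ)..(2 * Real.pi), u x) = 0 →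
        (∫ x in (0:ℝ)..(2 * Real.pi), wCub u n x)
          = ∑ i ∈ I, ∫ x in (0:ℝ)..(2 * Real.pi),
              Lam (a i 0) (b i 0) (e i 0) u x * Lam (a i 1) (b i 1) (e i 1) u x *
                Lam (a i 2) (b i 2) (e i 2) u x := by
  obtain ⟨I, e, a, b, he, h⟩ := stmt_16_general n hn
  exact ⟨I, e, a, b, he, fun u hu hper _ => h u hu hper⟩
end
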